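/- arXiv:1910.09825 — 2 statements merged into one kernel-verified Lean document; each statement's English description precedes it below -/
import Mathlib

section
/- Let q be a power of a prime p with p ∉ {2, 3, 5, 23}, q ≡ 1 (mod 4), and q > 2.4·10⁶. Then there exists a ∈ F_q such that a ≠ −1, 0, 1, the elements a, a+1, a³−a−1 are squares in F_q, and the elements a−1, a²+1, a²−a−1, a²+a+1, a²+a−1 are non-squares in F_q. -/
/-!
Let `χ` be the quadratic character of `F` and `f` a separable monic polynomial of degree `d` over
`F`, with `q = #F` odd. The multiplicative function `g ↦ χ (Res (g, f))` on monic polynomials is a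
quadratic character modulo `f`, so its `L`-function is a polynomial of degree less than `d` with
constant term `1`, and the sums of `χ (N (f a))` over `a ∈ F_{q ^ n}`, with `N` the norm to `F`, are
`-∑ ω ^ n` for at most `d - 1` complex numbers `ω`. Stepanov's method bounds these sums by
`O(q ^ n)` over the extension of degree `2 * n`, which forces `‖ω‖ ≤ √q`; for `n = 1` this is the
Weil bound `|∑ χ (f a)| ≤ (d - 1) * √q`.

Expanding `∑ a, ∏ i, (1 + ε i * χ (G i a))` over the subproducts of the eight polynomials `G i`,
whose degrees add up to `14`, the Weil bound yields an `a` with `χ (G i a) = ε i` for all `i` as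
soon as `q - 1537 * √q > 3584`.
-/

namespace QuadraticCharSum

open Polynomial
open Finset.HasAntidiagonal (antidiagonal mem_antidiagonal)

section Stepanov

theorem coeff_eval_X_pow_mul_add {R : Type*} [CommSemiring R] {r : ℕ} {W : R[X][X]}
    (hW : ∀ j, (W.coeff j).natDegree < r) (j : ℕ) {i : ℕ} (hi : i < r) :
    (W.eval (X ^ r)).coeff (j * r + i) = (W.coeff j).coeff i := by
  rw [eval_eq_sum_range, finsetSum_coeff, Finset.sum_eq_single j]
  · rw [← pow_mul, mul_comm r j, add_comm, coeff_mul_X_pow]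
  · intro b _ hb
    rw [← pow_mul, coeff_mul_X_pow']
    split_ifs with hle
    · refine coeff_eq_zero_of_natDegree_lt ((hW b).trans_le ?_)
      have : b < j := by
        refine lt_of_le_of_ne (not_lt.1 fun hlt => ?_) hb
        nlinarith
      have : r * b + r ≤ j * r := by nlinarith
      lia
    · rfl
  · intro hj
    simp [coeff_eq_zero_of_natDegree_lt (p := W) (n := j) (by simpa using hj)]

theorem eq_zero_of_eval_X_pow_eq_zero {R : Type*} [CommSemiring R] {r : ℕ} {W : R[X][X]}
    (hW : ∀ j, (W.coeff j).natDegree < r) (h : W.eval (X ^ r) = 0) : W = 0 := by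
  ext j i
  rcases lt_or_ge i r with hi | hi
  · simp [← coeff_eval_X_pow_mul_add hW j hi, h]
  · simp [coeff_eq_zero_of_natDegree_lt ((hW j).trans_le hi)]

theorem natDegree_coeff_mul_le {R : Type*} [Semiring R] {a b : R[X][X]} {k l : ℕ}
    (ha : ∀ j, (a.coeff j).natDegree ≤ k) (hb : ∀ j, (b.coeff j).natDegree ≤ l) (j : ℕ) :
    ((a * b).coeff j).natDegree ≤ k + l := by
  rw [coeff_mul]
  exact natDegree_sum_le_of_forall_le _ _ fun x _ =>
    natDegree_mul_le.trans (add_le_add (ha _) (hb _))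

theorem eq_zero_of_sq_eq_squarefree_mul_sq {R : Type*} [CommRing R] [IsDomain R]
    [IsIntegrallyClosed R] {f a b : R} (hf : Squarefree f) (hu : ¬ IsUnit f)
    (h : a ^ 2 = f * b ^ 2) : b = 0 := by
  by_contra hb
  obtain ⟨c, rfl⟩ : b ∣ a :=
    (IsIntegrallyClosed.pow_dvd_pow_iff two_ne_zero).1 ⟨f, by rw [h, mul_comm]⟩
  have hc : c * c = f := by
    have : b ^ 2 * (c * c) = b ^ 2 * f := by linear_combination h
    exact mul_left_cancel₀ (pow_ne_zero 2 hb) this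
  have huc : IsUnit c := hf c hc.dvd
  exact hu (hc ▸ huc.mul huc)

variable {K : Type*} [Field K] (p s : ℕ) [Fact p.Prime] [CharP K p] {f : K[X]}

theorem eval_X_pow_map_C_map_iterateFrobenius (f : K[X]) :
    ((f.map (iterateFrobenius K p s)).map C).eval (X ^ p ^ s) = f ^ p ^ s := by
  rw [eval_map, ← map_iterateFrobenius_expand p f s, map_expand, coe_expand]

-- Squaring `a = -f ^ m * e` and using `f ^ (2 * m) = f * f ^ p ^ s` gives an identity between
-- polynomials in `X ^ p ^ s` whose coefficients have degree `< p ^ s`; in such an identity `X` and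
-- `X ^ p ^ s` can be treated as independent variables.
theorem eq_zero_and_eq_zero_of_eval_X_pow_add_eq_zero (hf : f.Monic) (hsq : Squarefree f)
    (hd : 0 < f.natDegree) {m k l : ℕ} (hm : 2 * m = p ^ s + 1) (hk : 2 * k < p ^ s)
    (hl : f.natDegree + 2 * l < p ^ s) {a e : K[X][X]} (ha : ∀ j, (a.coeff j).natDegree ≤ k)
    (he : ∀ j, (e.coeff j).natDegree ≤ l)
    (h : a.eval (X ^ p ^ s) + f ^ m * e.eval (X ^ p ^ s) = 0) : a = 0 ∧ e = 0 := by
  set G : K[X][X] := (f.map (iterateFrobenius K p s)).map C with hG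
  have hsquare : a ^ 2 = C f * G * e ^ 2 := by
    refine sub_eq_zero.1 (eq_zero_of_eval_X_pow_eq_zero (r := p ^ s) (fun j => ?_) ?_)
    · have hCf : ∀ j, ((C f : K[X][X]).coeff j).natDegree ≤ f.natDegree := by
        intro j; rw [coeff_C]; split_ifs <;> simp
      have hGC : ∀ j, (G.coeff j).natDegree ≤ 0 := by
        intro j; rw [hG, coeff_map, natDegree_C]
      rw [coeff_sub, sq, sq]
      refine (natDegree_sub_le _ _).trans_lt (max_lt ?_ ?_)
      · exact (natDegree_coeff_mul_le ha ha j).trans_lt (by lia)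
      · exact (natDegree_coeff_mul_le (natDegree_coeff_mul_le hCf hGC)
          (natDegree_coeff_mul_le he he) j).trans_lt (by lia)
    · have hpow : (f ^ m) ^ 2 = f * f ^ p ^ s := by rw [← pow_mul, mul_comm, hm, pow_succ']
      simp only [eval_sub, eval_mul, eval_pow, eval_C, hG,
        eval_X_pow_map_C_map_iterateFrobenius, eq_neg_of_add_eq_zero_left h]
      linear_combination (e.eval (X ^ p ^ s)) ^ 2 * hpow
  have hlead : a.leadingCoeff ^ 2 = f * e.leadingCoeff ^ 2 := by
    have hGm : G.Monic := (hf.map _).map _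
    simpa [hGm.leadingCoeff] using congrArg leadingCoeff hsquare
  have hu : ¬ IsUnit f := fun hu => hd.ne' (natDegree_eq_zero_of_isUnit hu)
  have he0 : e = 0 := leadingCoeff_eq_zero.1 (eq_zero_of_sq_eq_squarefree_mul_sq hsq hu hlead)
  exact ⟨by simpa [he0] using hsquare, he0⟩

/-- The polynomial `∑ c (i, j) X ^ j Y ^ i` in the outer variable `Y`, with `i < J` and `j < k`;
Stepanov's auxiliary polynomials are its values at powers `Y = X ^ r`. -/
noncomputable def bivariate {R : Type*} [Semiring R] {J k : ℕ} (c : Fin J × Fin k → R) : R[X][X] :=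
  ∑ x, monomial x.1 (monomial x.2 (c x))

theorem coeff_coeff_bivariate {R : Type*} [Semiring R] {J k : ℕ} (c : Fin J × Fin k → R)
    (x : Fin J × Fin k) : ((bivariate c).coeff x.1).coeff x.2 = c x := by
  rw [bivariate, finsetSum_coeff, finsetSum_coeff, Finset.sum_eq_single x]
  · simp
  · intro y _ hy
    rw [coeff_monomial]
    split_ifs with h₁
    · rw [coeff_monomial, if_neg fun h₂ => hy (Prod.ext (Fin.ext h₁) (Fin.ext h₂))]
    · rw [coeff_zero]
  · simp

theorem natDegree_coeff_bivariate_le {R : Type*} [Semiring R] {J k : ℕ}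
    (c : Fin J × Fin k → R) (j : ℕ) : ((bivariate c).coeff j).natDegree ≤ k - 1 := by
  rw [bivariate, finsetSum_coeff]
  refine natDegree_sum_le_of_forall_le _ _ fun x _ => ?_
  rw [coeff_monomial]
  split_ifs
  · exact (natDegree_monomial_le _).trans (Nat.le_sub_one_of_lt x.2.2)
  · simp

theorem eval_X_pow_bivariate {R : Type*} [CommSemiring R] {J k : ℕ} (c : Fin J × Fin k → R)
    (r : ℕ) : (bivariate c).eval (X ^ r) = ∑ x, c x • X ^ (x.1 * r + x.2 : ℕ) := by
  rw [bivariate, eval_finsetSum]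
  refine Finset.sum_congr rfl fun x _ => ?_
  rw [eval_monomial, ← C_mul_X_pow_eq_monomial, smul_eq_C_mul]
  ring

theorem linearIndependent_X_pow_sumElim_pow_mul_X_pow (hf : f.Monic) (hsq : Squarefree f)
    (hd : 0 < f.natDegree) {m k l : ℕ} (J : ℕ) (hm : 2 * m = p ^ s + 1) (hk : 2 * (k - 1) < p ^ s)
    (hl : f.natDegree + 2 * (l - 1) < p ^ s) :
    LinearIndependent K (Sum.elim
      (fun x : Fin J × Fin k => (X ^ (x.1 * p ^ s + x.2 : ℕ) : K[X]))
      (fun x : Fin J × Fin l => f ^ m * X ^ (x.1 * p ^ s + x.2 : ℕ))) := by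
  refine Fintype.linearIndependent_iff.2 fun g hg => ?_
  obtain ⟨ha, he⟩ := eq_zero_and_eq_zero_of_eval_X_pow_add_eq_zero p s hf hsq hd hm hk hl
    (natDegree_coeff_bivariate_le (J := J) (g ∘ Sum.inl))
    (natDegree_coeff_bivariate_le (J := J) (g ∘ Sum.inr)) (by
      simpa [eval_X_pow_bivariate, Fintype.sum_sum_type, Finset.mul_sum] using hg)
  rintro (x | x)
  · simpa [ha] using (coeff_coeff_bivariate (g ∘ Sum.inl) x).symm
  · simpa [he] using (coeff_coeff_bivariate (g ∘ Sum.inr) x).symm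

theorem not_linearIndependent_of_degree_lt {ι : Type*} [Fintype ι] {v : ι → K[X]} {n : ℕ}
    (hv : ∀ i, (v i).degree < n) (hn : n < Fintype.card ι) : ¬ LinearIndependent K v := by
  intro hli
  have hspan : Submodule.span K (Set.range v) ≤ degreeLT K n := by
    rw [Submodule.span_le]
    rintro _ ⟨i, rfl⟩
    exact mem_degreeLT.2 (hv i)
  have : Module.Finite K (degreeLT K n) := .equiv (degreeLTEquiv K n).symm
  have hle := Submodule.finrank_mono hspan
  rw [finrank_span_eq_card hli, (degreeLTEquiv K n).finrank_eq, Module.finrank_fin_fun] at hle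
  lia

theorem natDegree_pow_mul_X_pow_le {R : Type*} [Semiring R] (f : R[X]) (m n : ℕ) :
    (f ^ m * X ^ n).natDegree ≤ m * f.natDegree + n :=
  natDegree_mul_le.trans (add_le_add natDegree_pow_le (natDegree_X_pow_le n))

-- The number `(t + 1 + d) * (2 * t - d)` of basis functions exceeds the dimension `2 * t ^ 2 + d`
-- of the space containing their images under Frobenius.
theorem not_linearIndependent_frobenius_family {t r : ℕ} (hr : r = 2 * t + 1)
    (ht : f.natDegree < t) (ε : K) :
    ¬ LinearIndependent K (Sum.elim
      (fun x : Fin (t + 1 + f.natDegree) × Fin t => (X ^ (x.1 + x.2 * r : ℕ) : K[X]))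
      (fun x : Fin (t + 1 + f.natDegree) × Fin (t - f.natDegree) =>
        C ε * (f ^ (t + 1) * X ^ (x.1 + x.2 * r : ℕ)))) := by
  refine not_linearIndependent_of_degree_lt (n := 2 * t ^ 2 + f.natDegree) (fun x => ?_) ?_
  · refine degree_le_natDegree.trans_lt (Nat.cast_lt.2 ?_)
    rcases x with ⟨i, j⟩ | ⟨i, j⟩
    · have hi : (i : ℕ) ≤ t + f.natDegree := by lia
      have hj : ((j : ℕ) + 1) * (2 * t + 1) ≤ t * (2 * t + 1) := Nat.mul_le_mul_right _ j.2
      rw [Sum.elim_inl, natDegree_X_pow, hr]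
      nlinarith
    · have hi : (i : ℕ) ≤ t + f.natDegree := by lia
      have hj : (j + 1 + f.natDegree) * (2 * t + 1) ≤ t * (2 * t + 1) :=
        Nat.mul_le_mul_right _ (by lia)
      refine ((natDegree_C_mul_le _ _).trans (natDegree_pow_mul_X_pow_le _ _ _)).trans_lt ?_
      rw [hr]
      nlinarith
  · obtain ⟨u, rfl⟩ := Nat.exists_eq_add_of_lt ht
    simp only [Fintype.card_sum, Fintype.card_prod, Fintype.card_fin,
      show f.natDegree + u + 1 - f.natDegree = u + 1 by lia]
    nlinarith

variable [Fintype K]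

-- A relation `∑ g i • v i = 0` is the image under Frobenius of `∑ g i ^ p ^ s • w i` on `S`.
theorem card_le_of_forall_eval_pow_eq (hcard : Fintype.card K = (p ^ s) ^ 2) {ι : Type*} [Finite ι]
    {v w : ι → K[X]} {S : Finset K} {D : ℕ}
    (hvw : ∀ x ∈ S, ∀ i, (w i).eval x ^ p ^ s = (v i).eval x) (hv : ¬ LinearIndependent K v)
    (hw : LinearIndependent K w) (hD : ∀ i, (w i).natDegree ≤ D) : S.card ≤ D := by
  cases nonempty_fintype ι
  obtain ⟨g, hg, i₀, hi₀⟩ := Fintype.not_linearIndependent_iff.1 hv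
  have hps : p ^ s ≠ 0 := (expChar_pow_pos K p s).ne'
  set U : K[X] := ∑ i, g i ^ p ^ s • w i with hU
  have hU0 : U ≠ 0 := fun h =>
    hi₀ (eq_zero_of_pow_eq_zero (Fintype.linearIndependent_iff.1 hw _ h i₀))
  have hroot : ∀ x ∈ S, x ∈ U.roots := by
    intro x hx
    refine (mem_roots hU0).2 (pow_eq_zero_iff hps |>.1 ?_)
    calc U.eval x ^ p ^ s = ∑ i, g i * (v i).eval x := by
          simp only [hU, eval_finsetSum, sum_pow_char_pow, eval_smul, smul_eq_mul, mul_pow,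
            hvw x hx, ← pow_mul, ← sq, ← hcard, FiniteField.pow_card]
      _ = (∑ i, g i • v i).eval x := by simp [eval_finsetSum]
      _ = 0 := by rw [hg, eval_zero]
  calc S.card ≤ U.roots.card := Multiset.card_le_card
        ((Multiset.le_iff_subset S.nodup).2 fun x hx => hroot x hx)
    _ ≤ U.natDegree := card_roots' U
    _ ≤ D := natDegree_sum_le_of_forall_le _ _ fun i _ => (natDegree_smul_le _ _).trans (hD i)

theorem card_eval_pow_card_div_two_eq_le [DecidableEq K] (hcard : Fintype.card K = (p ^ s) ^ 2)
    {t : ℕ} (hr : p ^ s = 2 * t + 1) (hf : f.Monic) (hsq : Squarefree f) (hd : 0 < f.natDegree)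
    (ht : f.natDegree < t) (ε : K) :
    Finset.card {x : K | f.eval x ^ (Fintype.card K / 2) = ε}
      ≤ (t + 1 + 2 * f.natDegree) * p ^ s := by
  have hpow : ∀ (x : K) (i j : ℕ), (x ^ (i * p ^ s + j)) ^ p ^ s = x ^ (i + j * p ^ s) := by
    intro x i j
    rw [← pow_mul, add_mul, mul_assoc, ← sq, ← hcard, pow_add, pow_mul', FiniteField.pow_card,
      ← pow_add]
  have hexp : (t + 1) * p ^ s = Fintype.card K / 2 + (t + 1) := by
    have : (2 * t + 1) ^ 2 / 2 = 2 * t ^ 2 + 2 * t := by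
      rw [show (2 * t + 1) ^ 2 = 2 * (2 * t ^ 2 + 2 * t) + 1 by ring]; lia
    rw [hcard, hr, this]
    ring
  refine card_le_of_forall_eval_pow_eq p s hcard (fun x hx => ?_)
    (not_linearIndependent_frobenius_family hr ht ε)
    (linearIndependent_X_pow_sumElim_pow_mul_X_pow p s hf hsq hd (m := t + 1) (k := t)
      (l := t - f.natDegree) (t + 1 + f.natDegree) (by lia) (by lia) (by lia)) ?_
  · have hx : f.eval x ^ (Fintype.card K / 2) = ε := by simpa using hx
    rintro (⟨i, j⟩ | ⟨i, j⟩)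
    · simp [hpow]
    · simp only [Sum.elim_inr, eval_mul, eval_pow, eval_X, eval_C, mul_pow, hpow]
      rw [← pow_mul, hexp, pow_add, hx, mul_assoc]
  · rintro (⟨i, j⟩ | ⟨i, j⟩)
    · have hi : ((i : ℕ) + 1) * p ^ s ≤ (t + 1 + f.natDegree) * p ^ s := Nat.mul_le_mul_right _ i.2
      rw [Sum.elim_inl, natDegree_X_pow]
      nlinarith [j.2]
    · have hi : ((i : ℕ) + 1) * p ^ s ≤ (t + 1 + f.natDegree) * p ^ s := Nat.mul_le_mul_right _ i.2
      refine (natDegree_pow_mul_X_pow_le _ _ _).trans ?_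
      have hj : (j : ℕ) + 1 + f.natDegree ≤ t := by lia
      nlinarith

theorem card_add_mul_sum_quadraticChar_le [DecidableEq K] (hf : f ≠ 0) (ε : ℤˣ) :
    (Fintype.card K : ℤ) + ε * ∑ x : K, quadraticChar K (f.eval x)
      ≤ 2 * Finset.card {x : K | quadraticChar K (f.eval x) = ε} + f.natDegree := by
  have hroots : Finset.card {x : K | f.eval x = 0} ≤ f.natDegree :=
    card_le_degree_of_subset_roots fun x hx => by simpa [hf] using hx
  calc (Fintype.card K : ℤ) + ε * ∑ x : K, quadraticChar K (f.eval x)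
      = ∑ x : K, (1 + ε * quadraticChar K (f.eval x)) := by
        simp [Finset.sum_add_distrib, Finset.mul_sum]
    _ ≤ ∑ x : K, (2 * (if quadraticChar K (f.eval x) = ε then 1 else 0)
          + if f.eval x = 0 then 1 else 0) := by
        refine Finset.sum_le_sum fun x _ => ?_
        by_cases hx : f.eval x = 0
        · simp only [hx, quadraticChar_zero]
          split_ifs <;> simp
        · rcases quadraticChar_dichotomy hx with h | h <;>
            rcases Int.units_eq_one_or ε with rfl | rfl <;> simp [h, hx]
    _ = 2 * Finset.card {x : K | quadraticChar K (f.eval x) = ε}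
          + Finset.card {x : K | f.eval x = 0} := by
        rw [Finset.sum_add_distrib, ← Finset.mul_sum, Finset.sum_boole, Finset.sum_boole]
    _ ≤ _ := by gcongr

theorem abs_sum_quadraticChar_le_of_card_eq_sq [DecidableEq K] (hp2 : p ≠ 2)
    (hcard : Fintype.card K = (p ^ s) ^ 2) (hf : f.Monic) (hsq : Squarefree f)
    (hd : 0 < f.natDegree) (hbig : 2 * f.natDegree + 1 < p ^ s) :
    |∑ x : K, quadraticChar K (f.eval x)| ≤ (5 * f.natDegree + 1) * p ^ s := by
  have hchar : ringChar K ≠ 2 := by rwa [ringChar.eq K p]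
  obtain ⟨t, ht⟩ : Odd (p ^ s) := ((Fact.out : p.Prime).odd_of_ne_two hp2).pow
  have hsign : ∀ ε : ℤˣ,
      ε * ∑ x : K, quadraticChar K (f.eval x) ≤ (5 * f.natDegree + 1) * p ^ s := by
    intro ε
    have hcount : Finset.card {x : K | quadraticChar K (f.eval x) = ε}
        ≤ (t + 1 + 2 * f.natDegree) * p ^ s := by
      refine le_trans (Finset.card_le_card ?_) (card_eval_pow_card_div_two_eq_le p s hcard ht hf hsq
        hd (by lia) (ε : ℤ))
      intro x hx
      have hx : quadraticChar K (f.eval x) = ε := by simpa using hx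
      rw [Finset.mem_filter_univ, ← quadraticChar_eq_pow_of_char_ne_two' hchar, hx]
    have hle := card_add_mul_sum_quadraticChar_le hf.ne_zero ε
    rw [hcard] at hle
    zify at hcount ht hbig
    push_cast at hle
    nlinarith
  exact abs_le'.2 ⟨by simpa using hsign 1, by simpa using hsign (-1)⟩

end Stepanov

section PowerSums

open Asymptotics Filter

variable {𝕜 : Type*} [NormedField 𝕜] {R : ℝ}

-- A linear combination of shifts of the sequence isolates the single term `c z * z ^ n`.
theorem norm_le_of_sum_mul_pow_isBigO {Z : Finset 𝕜} {c : 𝕜 → 𝕜} (hR : 0 < R)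
    (h : (fun n : ℕ => ∑ w ∈ Z, c w * w ^ n) =O[atTop] fun n => R ^ n) {z : 𝕜} (hz : z ∈ Z)
    (hc : c z ≠ 0) : ‖z‖ ≤ R := by
  classical
  set L : 𝕜[X] := Lagrange.basis Z id z
  have hisolate : ∀ n : ℕ, ∑ k ∈ Finset.range (L.natDegree + 1),
      L.coeff k * ∑ w ∈ Z, c w * w ^ (n + k) = c z * z ^ n := by
    intro n
    calc _ = ∑ w ∈ Z, c w * w ^ n * L.eval w := by
          simp_rw [eval_eq_sum_range, Finset.mul_sum]
          rw [Finset.sum_comm]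
          refine Finset.sum_congr rfl fun w _ => Finset.sum_congr rfl fun k _ => ?_
          ring
      _ = c z * z ^ n := by
          have hself : L.eval z = 1 := Lagrange.eval_basis_self (v := id) (Set.injOn_id _) hz
          rw [Finset.sum_eq_single_of_mem z hz fun w hw hwz => ?_, hself, mul_one]
          have hother : L.eval w = 0 := Lagrange.eval_basis_of_ne (v := id) hwz.symm hw
          rw [hother, mul_zero]
  have hshift : ∀ k : ℕ, (fun n : ℕ => ∑ w ∈ Z, c w * w ^ (n + k)) =O[atTop] fun n => R ^ n := by
    intro k
    refine (h.comp_tendsto (tendsto_add_atTop_nat k)).trans ?_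
    simpa only [Function.comp_def, pow_add, mul_comm] using
      isBigO_const_mul_self (R ^ k) (fun n : ℕ => R ^ n) atTop
  have hpow : (fun n : ℕ => z ^ n) =O[atTop] fun n => R ^ n := by
    refine (isBigO_const_mul_left_iff hc).1 ?_
    simp_rw [← hisolate]
    exact IsBigO.fun_sum fun k _ => (hshift k).const_mul_left _
  by_contra! hlt
  have hlittle : (fun n : ℕ => R ^ n) =o[atTop] fun n => z ^ n :=
    .of_norm_right ((isLittleO_pow_pow_of_lt_left hR.le hlt).congr_right
      fun n => (norm_pow z n).symm)
  have hz0 : z ≠ 0 := norm_pos_iff.1 (hR.trans hlt)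
  exact isLittleO_irrefl (Frequently.of_forall fun n => pow_ne_zero n hz0)
    (hpow.trans_isLittleO hlittle)

theorem norm_le_of_mem_of_sum_pow_isBigO [CharZero 𝕜] {s : Multiset 𝕜} (hR : 0 < R)
    (h : (fun n : ℕ => (s.map (· ^ n)).sum) =O[atTop] fun n => R ^ n) {z : 𝕜} (hz : z ∈ s) :
    ‖z‖ ≤ R := by
  classical
  refine norm_le_of_sum_mul_pow_isBigO (Z := s.toFinset) (c := fun w => s.count w) hR ?_
    (Multiset.mem_toFinset.2 hz) ?_
  · simpa only [Finset.sum_multiset_map_count, nsmul_eq_mul] using h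
  · simpa using hz

end PowerSums

section LogDerivative

variable {k : Type*} [Field k]

theorem one_sub_C_mul_X_mul_mk_pow_succ (ω : k) :
    (1 - PowerSeries.C ω * PowerSeries.X) * PowerSeries.mk (fun n => ω ^ (n + 1)) =
      PowerSeries.C ω := by
  ext n
  rcases n with _ | n
  · simp [sub_mul, mul_assoc]
  · rw [sub_mul, mul_assoc, one_mul, map_sub, PowerSeries.coeff_C_mul,
      PowerSeries.coeff_succ_X_mul, PowerSeries.coeff_mk, PowerSeries.coeff_mk, PowerSeries.coeff_C,
      if_neg n.succ_ne_zero]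
    ring

theorem derivative_prod_one_sub_C_mul_X (s : Multiset k) :
    PowerSeries.derivative k (s.map fun ω => 1 - PowerSeries.C ω * PowerSeries.X).prod =
      -((s.map fun ω => 1 - PowerSeries.C ω * PowerSeries.X).prod *
        PowerSeries.mk fun n => (s.map (· ^ (n + 1))).sum) := by
  induction s using Multiset.induction with
  | empty => ext; simp
  | cons ω s ih =>
    have hmk : (PowerSeries.mk fun n => ((ω ::ₘ s).map (· ^ (n + 1))).sum) =
        PowerSeries.mk (fun n => ω ^ (n + 1)) +
          PowerSeries.mk fun n => (s.map (· ^ (n + 1))).sum := by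
      ext n; simp
    have hfactor : PowerSeries.derivative k (1 - PowerSeries.C ω * PowerSeries.X) =
        -PowerSeries.C ω := by
      simp
    rw [Multiset.map_cons, Multiset.prod_cons, Derivation.leibniz, ih, hmk, hfactor]
    simp only [smul_eq_mul]
    linear_combination
      (s.map fun ω => 1 - PowerSeries.C ω * PowerSeries.X).prod *
        one_sub_C_mul_X_mul_mk_pow_succ ω

theorem exists_eq_prod_one_sub_C_mul_X [IsAlgClosed k] {P : k[X]} (hP : P.coeff 0 = 1) :
    ∃ s : Multiset k, s.card = P.natDegree ∧ P = (s.map fun ω => 1 - C ω * X).prod := by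
  have hP0 : P ≠ 0 := by rintro rfl; simp at hP
  have hsplit : P.Splits := IsAlgClosed.splits P
  have hroots : ∀ a ∈ P.roots, a ≠ 0 := by
    rintro _ ha rfl
    rw [mem_roots hP0, IsRoot, ← coeff_zero_eq_eval_zero, hP] at ha
    exact one_ne_zero ha
  have hfactor : (P.roots.map fun a => X - C a).prod =
      C (P.roots.map (- ·)).prod * (P.roots.map fun a => 1 - C a⁻¹ * X).prod := by
    rw [map_multiset_prod, Multiset.map_map, ← Multiset.prod_map_mul]
    refine congrArg _ (Multiset.map_congr rfl fun a ha => ?_)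
    have hC : (C a : k[X]) * C a⁻¹ = 1 := by rw [← C_mul, mul_inv_cancel₀ (hroots a ha), C_1]
    simp only [Function.comp_apply, C_neg]
    linear_combination (-X) * hC
  refine ⟨P.roots.map (·⁻¹), ?_, ?_⟩
  · rw [Multiset.card_map, hsplit.natDegree_eq_card_roots]
  · have hconst : P = C (P.leadingCoeff * (P.roots.map (- ·)).prod) *
        (P.roots.map fun a => 1 - C a⁻¹ * X).prod := by
      conv_lhs => rw [hsplit.eq_prod_roots, hfactor, ← mul_assoc, ← C_mul]
    have hone : P.leadingCoeff * (P.roots.map (- ·)).prod = 1 := by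
      rw [← hP, coeff_zero_eq_eval_zero]
      conv_rhs => rw [hconst]
      simp [eval_multiset_prod]
    rw [hone, C_1, one_mul] at hconst
    rwa [Multiset.map_map]

-- With `P = ∑ A n X ^ n = ∏ (1 - ω X)`, the recurrence says that `∑ S n X ^ n` is the
-- logarithmic derivative of `P`.
theorem exists_forall_eq_neg_sum_pow [IsAlgClosed k] {d : ℕ} {A S : ℕ → k} (hA0 : A 0 = 1)
    (hA : ∀ n, d ≤ n → A n = 0)
    (hrec : ∀ n : ℕ, (n + 1) * A (n + 1) = ∑ a ∈ antidiagonal n, A a.1 * S a.2) :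
    ∃ s : Multiset k, s.card < d ∧ ∀ n, S n = -(s.map (· ^ (n + 1))).sum := by
  set P : k[X] := PowerSeries.trunc d (PowerSeries.mk A) with hP
  have hPA : (P : PowerSeries k) = PowerSeries.mk A := by
    ext n
    rw [coeff_coe, hP, PowerSeries.coeff_trunc, PowerSeries.coeff_mk]
    split_ifs with hn
    · rfl
    · exact (hA n (not_lt.1 hn)).symm
  obtain ⟨s, hcard, hs⟩ := exists_eq_prod_one_sub_C_mul_X (P := P) (by
    simpa [hA0] using congrArg (PowerSeries.coeff 0) hPA)
  have hderiv : PowerSeries.derivative k (P : PowerSeries k) = P * PowerSeries.mk S := by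
    ext n
    rw [hPA, PowerSeries.coeff_derivative, PowerSeries.coeff_mul]
    simpa [mul_comm] using hrec n
  have hprod : (P : PowerSeries k) =
      (s.map fun ω => 1 - PowerSeries.C ω * PowerSeries.X).prod := by
    have := congrArg coeToPowerSeries.ringHom hs
    rw [map_multiset_prod, Multiset.map_map] at this
    simpa [Function.comp_def] using this
  have hP0 : (P : PowerSeries k) ≠ 0 := by
    rw [hPA]
    exact fun h => one_ne_zero (α := k) (by simpa [hA0] using congrArg (PowerSeries.coeff 0) h)
  have hmk : PowerSeries.mk S = -PowerSeries.mk fun n => (s.map (· ^ (n + 1))).sum := by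
    refine mul_left_cancel₀ hP0 ?_
    rw [← hderiv, mul_neg, hprod, derivative_prod_one_sub_C_mul_X]
  refine ⟨s, ?_, fun n => ?_⟩
  · rw [hcard, natDegree_lt_iff_degree_lt (by simpa using hP0)]
    exact PowerSeries.degree_trunc_lt _ _
  · simpa using congrArg (PowerSeries.coeff n) hmk

end LogDerivative

section Resultant

variable {R : Type*} [CommRing R] {f g h : R[X]}

theorem resultant_natDegree_left_eq_of_monic {n : ℕ} (hf : f.Monic) (hn : g.natDegree ≤ n) :
    resultant f g f.natDegree n = resultant f g := by
  obtain ⟨k, rfl⟩ := Nat.exists_eq_add_of_le hn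
  rw [resultant_add_right_deg _ _ _ _ _ le_rfl, hf.coeff_natDegree, one_pow, one_mul]

theorem resultant_mul_right_of_monic (hf : f.Monic) (g h : R[X]) :
    resultant f (g * h) = resultant f g * resultant f h := by
  rw [← resultant_mul_right f g h _ le_rfl,
    resultant_natDegree_left_eq_of_monic hf natDegree_mul_le]

theorem resultant_add_mul_right_of_monic (hf : f.Monic) (g k : R[X]) :
    resultant f (g + f * k) = resultant f g := by
  set n := max g.natDegree (k.natDegree + f.natDegree)
  have hadd : (g + f * k).natDegree ≤ n :=
    natDegree_add_le_of_degree_le (le_max_left _ _)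
      (natDegree_mul_le.trans ((add_comm _ _).le.trans (le_max_right _ _)))
  rw [← resultant_natDegree_left_eq_of_monic hf hadd,
    resultant_add_mul_right _ _ _ _ _ (le_max_right _ _) le_rfl,
    resultant_natDegree_left_eq_of_monic hf (le_max_left _ _)]

theorem resultant_mul_left_of_monic (hg : g.Monic) (hh : h.Monic) (f : R[X]) :
    resultant (g * h) f = resultant g f * resultant h f := by
  rw [hg.natDegree_mul hh, resultant_mul_left _ _ _ _ le_rfl]

theorem resultant_eq_of_natDegree_eq_of_dvd_sub {g' u : R[X]} (hf : f.Monic)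
    (hdeg : g'.natDegree = g.natDegree) (hdvd : f ∣ g' - g * u) :
    resultant g' f = resultant g f * resultant f u := by
  obtain ⟨k, hk⟩ := hdvd
  have hg' : g' = g * u + f * k := by rw [← hk]; ring
  calc resultant g' f = (-1) ^ (g.natDegree * f.natDegree) * resultant f g' := by
        rw [resultant_comm, hdeg]
    _ = (-1) ^ (g.natDegree * f.natDegree) * resultant f g * resultant f u := by
        rw [hg', resultant_add_mul_right_of_monic hf, resultant_mul_right_of_monic hf, mul_assoc]
    _ = resultant g f * resultant f u := by rw [← resultant_comm]

end Resultant

section Norm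

open IntermediateField

variable {F K : Type*} [Field F] [Field K] [Algebra F K]

theorem algebraMap_resultant_eq_prod_aroots {f : F[X]} (hf : f.Monic) (g : F[X])
    [IsAlgClosed K] :
    algebraMap F K (resultant f g) = ((f.aroots K).map fun α => aeval α g).prod := by
  have h := resultant_eq_prod_eval (f.map (algebraMap F K)) (g.map (algebraMap F K)) g.natDegree
    natDegree_map_le (IsAlgClosed.splits _)
  rw [natDegree_map, resultant_map_map, (hf.map _).leadingCoeff, one_pow, one_mul] at h
  simpa only [eval_map_algebraMap] using h

/-- The characteristic polynomial of `β` over `F`, as a power of its minimal polynomial. It links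
the sum over `β` in an extension of `F` to the sum over monic polynomials. -/
noncomputable def fieldCharpoly (F : Type*) {K : Type*} [Field F] [Field K] [Algebra F K]
    (β : K) : F[X] :=
  minpoly F β ^ (Module.finrank F K / (minpoly F β).natDegree)

variable [FiniteDimensional F K]

theorem fieldCharpoly_monic (β : K) : (fieldCharpoly F β).Monic :=
  (minpoly.monic (Algebra.IsIntegral.isIntegral _)).pow _

theorem natDegree_fieldCharpoly (β : K) : (fieldCharpoly F β).natDegree = Module.finrank F K := by
  rw [fieldCharpoly, natDegree_pow,
    Nat.div_mul_cancel (minpoly.degree_dvd (Algebra.IsIntegral.isIntegral _))]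

variable [Algebra.IsSeparable F K]

theorem norm_aeval_gen (pb : PowerBasis F K) (f : F[X]) :
    Algebra.norm F (aeval pb.gen f) = resultant (minpoly F pb.gen) f := by
  classical
  set E := AlgebraicClosure F
  have hnodup : ((minpoly F pb.gen).aroots E).Nodup :=
    nodup_roots (Separable.map (Algebra.IsSeparable.isSeparable F pb.gen))
  apply (algebraMap F E).injective
  calc algebraMap F E (Algebra.norm F (aeval pb.gen f))
      = ∏ σ : K →ₐ[F] E, σ (aeval pb.gen f) := Algebra.norm_eq_prod_embeddings F E _
    _ = ∏ α : {α // α ∈ (minpoly F pb.gen).aroots E}, aeval (α : E) f :=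
        Fintype.prod_equiv pb.liftEquiv' _ _ fun σ => by
          rw [PowerBasis.liftEquiv'_apply_coe, aeval_algHom_apply]
    _ = (((minpoly F pb.gen).aroots E).map fun α => aeval α f).prod := by
        rw [Finset.prod_mem_multiset _ _ (fun α => aeval α f) fun _ => rfl,
          Finset.prod_eq_multiset_prod, Multiset.toFinset_val, hnodup.dedup]
    _ = algebraMap F E (resultant (minpoly F pb.gen) f) :=
        (algebraMap_resultant_eq_prod_aroots (minpoly.monic pb.isIntegral_gen) f).symm

theorem norm_aeval_eq_resultant_fieldCharpoly (β : K) (f : F[X]) :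
    Algebra.norm F (aeval β f) = resultant (fieldCharpoly F β) f := by
  have hβ : IsIntegral F β := Algebra.IsIntegral.isIntegral _
  have hgen : Algebra.norm F (aeval (AdjoinSimple.gen F β) f) = resultant (minpoly F β) f := by
    have h := norm_aeval_gen (adjoin.powerBasis hβ) f
    rwa [adjoin.powerBasis_gen hβ, minpoly_gen] at h
  have hmap : aeval β f = algebraMap F⟮β⟯ K (aeval (AdjoinSimple.gen F β) f) := by
    rw [← aeval_algebraMap_apply, AdjoinSimple.algebraMap_gen]
  have hfinrank : Module.finrank F⟮β⟯ K = Module.finrank F K / (minpoly F β).natDegree := by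
    rw [← Module.finrank_mul_finrank F F⟮β⟯ K, adjoin.finrank hβ,
      Nat.mul_div_cancel_left _ (minpoly.natDegree_pos hβ)]
  rw [fieldCharpoly, resultant_pow_left _ _ _ _ (by simp [minpoly.monic hβ]) le_rfl, hmap,
    ← Algebra.norm_norm (S := F⟮β⟯), Algebra.norm_algebraMap, map_pow, hgen, hfinrank]

end Norm

section QuadraticChar

variable {F : Type*} [Field F] [Fintype F] [DecidableEq F]

theorem quadraticChar_norm (hF : ringChar F ≠ 2) {K : Type*} [Field K] [Fintype K]
    [DecidableEq K] [Algebra F K] (x : K) :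
    quadraticChar F (Algebra.norm F x) = quadraticChar K x := by
  have hK : ringChar K ≠ 2 := by rwa [← Algebra.ringChar_eq F K]
  rcases eq_or_ne x 0 with rfl | hx
  · simp
  obtain ⟨k, hk⟩ : Fintype.card F - 1 ∣ Fintype.card K - 1 := by
    rw [Module.card_eq_pow_finrank (K := F) (V := K)]
    simpa using Nat.sub_dvd_pow_sub_pow (Fintype.card F) 1 (Module.finrank F K)
  have hexp : Fintype.card K / 2 = k * (Fintype.card F / 2) := by
    have hFodd := FiniteField.odd_card_of_char_ne_two hF
    have hKodd := FiniteField.odd_card_of_char_ne_two hK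
    have hFcard : Fintype.card F - 1 = 2 * (Fintype.card F / 2) := by omega
    rw [hFcard, mul_assoc, mul_comm _ k] at hk
    omega
  have hpow : x ^ (Fintype.card K / 2) =
      algebraMap F K (Algebra.norm F x ^ (Fintype.card F / 2)) := by
    rw [map_pow, FiniteField.algebraMap_norm_eq_pow, ← pow_mul, hexp, Nat.card_eq_fintype_card,
      Nat.card_eq_fintype_card, hk,
      Nat.mul_div_cancel_left _ (Nat.sub_pos_of_lt Fintype.one_lt_card)]
  rw [quadraticChar_eq_pow_of_char_ne_two hF (Algebra.norm_ne_zero_iff.2 hx),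
    quadraticChar_eq_pow_of_char_ne_two hK hx, hpow]
  simp only [map_eq_one_iff _ (algebraMap F K).injective]

end QuadraticChar

section ResultantSurjective

variable {F : Type*} [Field F] [Finite F]

theorem exists_resultant_eq_of_irreducible {P : F[X]} (hP : Irreducible P) (hmonic : P.Monic)
    (c : F) : ∃ u : F[X], resultant P u = c := by
  have : Fact (Irreducible P) := ⟨hP⟩
  set pb := AdjoinRoot.powerBasis hP.ne_zero
  have : FiniteDimensional F (AdjoinRoot P) := pb.finite
  have : Finite (AdjoinRoot P) := Module.finite_of_finite F
  obtain ⟨γ, hγ⟩ := FiniteField.norm_surjective F (AdjoinRoot P) c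
  obtain ⟨u, rfl⟩ := AdjoinRoot.mk_surjective γ
  refine ⟨u, ?_⟩
  rw [← hγ, ← AdjoinRoot.aeval_eq, ← AdjoinRoot.powerBasis_gen hP.ne_zero, norm_aeval_gen pb,
    AdjoinRoot.minpoly_powerBasis_gen_of_monic hmonic]

-- Prescribe `u` modulo one irreducible factor of `f` and `1` modulo the cofactor.
theorem exists_resultant_eq {f : F[X]} (hf : f.Monic) (hsq : Squarefree f)
    (hd : 0 < f.natDegree) (c : F) : ∃ u : F[X], resultant f u = c := by
  obtain ⟨P, hPmonic, hP, h, rfl⟩ := exists_monic_irreducible_factor f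
    (not_isUnit_of_natDegree_pos f hd)
  have hh : h.Monic := hPmonic.of_mul_monic_left hf
  obtain ⟨a, b, hab⟩ : IsCoprime P h := (IsRelPrime.of_squarefree_mul hsq).isCoprime
  obtain ⟨u, hu⟩ := exists_resultant_eq_of_irreducible hP hPmonic c
  have hmodP : u * (b * h) + a * P = u + P * (a * (1 - u)) := by
    linear_combination u * hab
  have hmodh : u * (b * h) + a * P = 1 + h * (b * (u - 1)) := by
    linear_combination hab
  refine ⟨u * (b * h) + a * P, ?_⟩
  calc resultant (P * h) (u * (b * h) + a * P)
      = resultant P (u + P * (a * (1 - u))) * resultant h (1 + h * (b * (u - 1))) := by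
        rw [resultant_mul_left_of_monic hPmonic hh, ← hmodP, ← hmodh]
    _ = c := by
        rw [resultant_add_mul_right_of_monic hPmonic, resultant_add_mul_right_of_monic hh, hu,
          resultant_one_right, hh.coeff_natDegree, one_pow, mul_one]

end ResultantSurjective

section Counting

open UniqueFactorizationMonoid

theorem card_filter_range_dvd_succ_and_div_le {n e c : ℕ} (he : 0 < e) (hc : c * e ≤ n) :
    ((Finset.range n).filter fun j => e ∣ j + 1 ∧ (j + 1) / e ≤ c).card = c := by
  have himage : ((Finset.range n).filter fun j => e ∣ j + 1 ∧ (j + 1) / e ≤ c) =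
      (Finset.range c).image fun i => (i + 1) * e - 1 := by
    ext j
    simp only [Finset.mem_filter, Finset.mem_range, Finset.mem_image]
    constructor
    · rintro ⟨-, ⟨m, hm⟩, hle⟩
      rw [hm, Nat.mul_div_cancel_left _ he] at hle
      have hm0 : m ≠ 0 := by rintro rfl; simp at hm
      refine ⟨m - 1, by lia, ?_⟩
      rw [Nat.sub_add_cancel (Nat.pos_of_ne_zero hm0), mul_comm, ← hm, Nat.add_sub_cancel]
    · rintro ⟨i, hi, rfl⟩
      have hpos : 0 < (i + 1) * e := by positivity
      have hle : (i + 1) * e ≤ c * e := Nat.mul_le_mul_right e hi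
      rw [Nat.sub_add_cancel hpos, Nat.mul_div_cancel _ he]
      exact ⟨by lia, Dvd.intro_left _ rfl, hi⟩
  rw [himage, Finset.card_image_of_injective, Finset.card_range]
  intro a b hab
  have ha : 0 < (a + 1) * e := by positivity
  have hb : 0 < (b + 1) * e := by positivity
  exact Nat.succ_injective (Nat.eq_of_mul_eq_mul_right he (Nat.sub_one_cancel ha hb hab))

variable {F : Type*} [Field F]

open Classical in
theorem pow_dvd_iff_le_count_normalizedFactors {P g : F[X]} (hP : Irreducible P)
    (hmonic : P.Monic) (hg : g ≠ 0) (k : ℕ) :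
    P ^ k ∣ g ↔ k ≤ (normalizedFactors g).count P := by
  rw [pow_dvd_iff_le_emultiplicity, emultiplicity_eq_count_normalizedFactors hP hg,
    hmonic.normalize_eq_self, Nat.cast_le]

open Classical in
theorem sum_count_mul_natDegree_normalizedFactors {g : F[X]} (hg : g.Monic) :
    ∑ P ∈ (normalizedFactors g).toFinset, (normalizedFactors g).count P * P.natDegree =
      g.natDegree := by
  have hmonic : ∀ P ∈ normalizedFactors g, P.Monic := fun P hP =>
    ((Polynomial.mem_normalizedFactors_iff hg.ne_zero).1 hP).2.1
  have hprod : (normalizedFactors g).prod = g := by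
    rw [prod_normalizedFactors_eq hg.ne_zero, hg.normalize_eq_self]
  conv_rhs => rw [← hprod, natDegree_multiset_prod_of_monic _ hmonic,
    Finset.sum_multiset_map_count]
  simp only [smul_eq_mul]

variable [Finite F]

variable {K : Type*} [Field K] [Fintype K] [Algebra F K]

open Classical in
theorem card_filter_minpoly_eq {P : F[X]} (hP : Irreducible P) (hmonic : P.Monic) :
    (Finset.univ.filter fun β : K => minpoly F β = P).card =
      if P.natDegree ∣ Module.finrank F K then P.natDegree else 0 := by
  split_ifs with hdeg
  · have hcard : Fintype.card K = Nat.card F ^ Module.finrank F K := by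
      rw [← Nat.card_eq_fintype_card, Module.natCard_eq_pow_finrank (K := F) (V := K)]
    have hdvd : P ∣ X ^ Fintype.card K - X :=
      hcard ▸ hP.natDegree_dvd_iff_dvd_X_pow_card_pow_sub_X.1 hdeg
    have hsplits : (P.map (algebraMap F K)).Splits :=
      (IsSplittingField.splits (L := K) (X ^ Fintype.card K - X : F[X])).of_dvd
        (Polynomial.map_ne_zero (FiniteField.X_pow_card_sub_X_ne_zero _ Fintype.one_lt_card))
        (Polynomial.map_dvd _ hdvd)
    rw [← card_rootSet_eq_natDegree (PerfectField.separable_of_irreducible hP) hsplits,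
      ← Set.toFinset_card]
    congr 1
    ext β
    rw [Finset.mem_filter_univ, Set.mem_toFinset, mem_rootSet_of_ne hmonic.ne_zero]
    exact ⟨fun h => h ▸ minpoly.aeval F β,
      fun h => (minpoly.eq_of_irreducible_of_monic hP h hmonic).symm⟩
  · rw [Finset.card_eq_zero, Finset.filter_eq_empty_iff]
    rintro β - rfl
    exact hdeg (minpoly.degree_dvd (Algebra.IsIntegral.isIntegral _))

open Classical in
theorem card_filter_fieldCharpoly_dvd {g : F[X]} (hg : g ≠ 0) :
    (Finset.univ.filter fun β : K => fieldCharpoly F β ∣ g).card =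
      ∑ P ∈ (normalizedFactors g).toFinset,
        if P.natDegree ∣ Module.finrank F K ∧
            Module.finrank F K / P.natDegree ≤ (normalizedFactors g).count P
          then P.natDegree else 0 := by
  have hmaps : ∀ β ∈ Finset.univ.filter fun β : K => fieldCharpoly F β ∣ g,
      minpoly F β ∈ (normalizedFactors g).toFinset := by
    intro β hβ
    have hint : IsIntegral F β := Algebra.IsIntegral.isIntegral _
    have hexp : Module.finrank F K / (minpoly F β).natDegree ≠ 0 :=
      (Nat.div_pos (Nat.le_of_dvd Module.finrank_pos (minpoly.degree_dvd hint))
        (minpoly.natDegree_pos hint)).ne'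
    rw [Multiset.mem_toFinset, Polynomial.mem_normalizedFactors_iff hg]
    exact ⟨minpoly.irreducible hint, minpoly.monic hint,
      (dvd_pow_self _ hexp).trans ((Finset.mem_filter_univ β).1 hβ)⟩
  rw [Finset.card_eq_sum_card_fiberwise hmaps]
  refine Finset.sum_congr rfl fun P hPmem => ?_
  rw [Multiset.mem_toFinset, Polynomial.mem_normalizedFactors_iff hg] at hPmem
  obtain ⟨hP, hmonic, -⟩ := hPmem
  have hfiber : ((Finset.univ.filter fun β : K => fieldCharpoly F β ∣ g).filter
        fun β => minpoly F β = P) =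
      (Finset.univ.filter fun β : K => minpoly F β = P).filter fun _ =>
        Module.finrank F K / P.natDegree ≤ (normalizedFactors g).count P := by
    rw [Finset.filter_filter, Finset.filter_filter]
    refine Finset.filter_congr fun β _ => ?_
    rw [and_comm, and_congr_right_iff]
    rintro rfl
    exact pow_dvd_iff_le_count_normalizedFactors hP hmonic hg _
  rw [hfiber, Finset.filter_const, ite_and, apply_ite Finset.card, card_filter_minpoly_eq hP hmonic,
    Finset.card_empty]
  split_ifs <;> rfl

open Classical in
theorem sum_card_filter_fieldCharpoly_dvd {L : ℕ → Type*} [∀ j, Field (L j)]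
    [∀ j, Fintype (L j)] [∀ j, Algebra F (L j)] (hL : ∀ j, Module.finrank F (L j) = j + 1)
    {g : F[X]} (hg : g.Monic) :
    ∑ j ∈ Finset.range g.natDegree,
      (Finset.univ.filter fun β : L j => fieldCharpoly F β ∣ g).card = g.natDegree := by
  simp only [card_filter_fieldCharpoly_dvd hg.ne_zero, hL]
  rw [Finset.sum_comm]
  conv_rhs => rw [← sum_count_mul_natDegree_normalizedFactors hg]
  refine Finset.sum_congr rfl fun P hP => ?_
  have hle : (normalizedFactors g).count P * P.natDegree ≤ g.natDegree :=
    (Finset.single_le_sum (f := fun P => (normalizedFactors g).count P * P.natDegree)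
      (fun _ _ => Nat.zero_le _) hP).trans (sum_count_mul_natDegree_normalizedFactors hg).le
  rw [Multiset.mem_toFinset, Polynomial.mem_normalizedFactors_iff hg.ne_zero] at hP
  rw [← Finset.sum_filter, Finset.sum_const, smul_eq_mul,
    card_filter_range_dvd_succ_and_div_le hP.1.natDegree_pos hle]

end Counting

section LFunction

variable {F : Type*} [Field F]

theorem finite_setOf_monic_natDegree_eq [Finite F] (n : ℕ) :
    {g : F[X] | g.Monic ∧ g.natDegree = n}.Finite := by
  have : Finite (degreeLT F n) := .of_equiv _ (degreeLTEquiv F n).symm.toEquiv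
  exact Finite.of_equiv _ (monicEquivDegreeLT n).symm

/-- The monic polynomials of degree `n` over a finite field, over which the coefficients of the
`L`-function are summed. -/
noncomputable def monicsOfNatDegree (F : Type*) [Field F] [Finite F] (n : ℕ) : Finset F[X] :=
  (finite_setOf_monic_natDegree_eq n).toFinset

theorem mem_monicsOfNatDegree [Finite F] {n : ℕ} {g : F[X]} :
    g ∈ monicsOfNatDegree F n ↔ g.Monic ∧ g.natDegree = n :=
  Set.Finite.mem_toFinset _

variable [Fintype F] [DecidableEq F]

/-- The coefficient of degree `n` of the `L`-function `∑ χ(g) T ^ deg g` (over monic `g`) of the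
quadratic character modulo `f`, written as `χ(g) = χ_F(Res(g, f))`. -/
noncomputable def lCoeff (f : F[X]) (n : ℕ) : ℤ :=
  ∑ g ∈ monicsOfNatDegree F n, quadraticChar F (resultant g f)

theorem lCoeff_zero (f : F[X]) : lCoeff f 0 = 1 := by
  have hmonics : monicsOfNatDegree F 0 = {1} := by
    ext g
    rw [mem_monicsOfNatDegree, Finset.mem_singleton]
    refine ⟨fun h => eq_one_of_monic_natDegree_zero h.1 h.2, ?_⟩
    rintro rfl
    exact ⟨monic_one, natDegree_one⟩
  simp [lCoeff, hmonics]

open Classical in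
theorem sum_filter_dvd_quadraticChar_resultant {c : F[X]} (hc : c.Monic) (f : F[X]) (m : ℕ) :
    ∑ g ∈ monicsOfNatDegree F (m + c.natDegree) with c ∣ g, quadraticChar F (resultant g f) =
      lCoeff f m * quadraticChar F (resultant c f) := by
  rw [lCoeff, Finset.sum_mul]
  symm
  refine Finset.sum_bij (fun k _ => k * c) ?_ ?_ ?_ ?_
  · intro k hk
    rw [mem_monicsOfNatDegree] at hk
    rw [Finset.mem_filter, mem_monicsOfNatDegree, hk.1.natDegree_mul hc, hk.2]
    exact ⟨⟨hk.1.mul hc, rfl⟩, dvd_mul_left _ _⟩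
  · intro k _ k' _ h
    exact mul_right_cancel₀ hc.ne_zero h
  · intro g hg
    rw [Finset.mem_filter, mem_monicsOfNatDegree] at hg
    obtain ⟨⟨hmonic, hdeg⟩, k, rfl⟩ := hg
    have hk : k.Monic := hc.of_mul_monic_left hmonic
    rw [hc.natDegree_mul hk, add_comm, Nat.add_right_cancel_iff] at hdeg
    exact ⟨k, mem_monicsOfNatDegree.2 ⟨hk, hdeg⟩, mul_comm _ _⟩
  · intro k hk
    rw [resultant_mul_left_of_monic (mem_monicsOfNatDegree.1 hk).1 hc, map_mul]

open Classical in
theorem lCoeff_mul_sum_quadraticChar_norm {K : Type*} [Field K] [Fintype K] [Algebra F K]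
    (f : F[X]) (m : ℕ) :
    lCoeff f m * ∑ β : K, quadraticChar F (Algebra.norm F (aeval β f)) =
      ∑ g ∈ monicsOfNatDegree F (m + Module.finrank F K),
        ((Finset.univ.filter fun β : K => fieldCharpoly F β ∣ g).card : ℤ) *
          quadraticChar F (resultant g f) := by
  calc _ = ∑ β : K, ∑ g ∈ monicsOfNatDegree F (m + Module.finrank F K) with
        fieldCharpoly F β ∣ g, quadraticChar F (resultant g f) := by
        rw [Finset.mul_sum]
        refine Finset.sum_congr rfl fun β _ => ?_
        rw [norm_aeval_eq_resultant_fieldCharpoly,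
          ← sum_filter_dvd_quadraticChar_resultant (fieldCharpoly_monic β),
          natDegree_fieldCharpoly]
    _ = _ := by
        simp_rw [Finset.sum_filter]
        rw [Finset.sum_comm]
        simp_rw [← Finset.sum_filter, Finset.sum_const, nsmul_eq_mul]

/-- The character sum of `f` over the extension of degree `j + 1` of `F`; the quadratic character
of the extension is expressed through the norm. -/
noncomputable def extCharSum (p : ℕ) [Fact p.Prime] [CharP F p] (f : F[X]) (j : ℕ) : ℤ :=
  ∑ᶠ β : FiniteField.Extension F p (j + 1), quadraticChar F (Algebra.norm F (aeval β f))

variable (p : ℕ) [Fact p.Prime] [CharP F p]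

theorem extCharSum_eq_sum {K : Type*} [Field K] [Fintype K] [Algebra F K] {j : ℕ}
    (hK : Module.finrank F K = j + 1) (f : F[X]) :
    extCharSum p f j = ∑ β : K, quadraticChar F (Algebra.norm F (aeval β f)) := by
  set e := FiniteField.algEquivExtension F p (j + 1) K hK
  rw [extCharSum, ← finsum_comp_equiv e.toEquiv, finsum_eq_sum_of_fintype]
  refine Finset.sum_congr rfl fun β _ => ?_
  rw [AlgEquiv.toEquiv_eq_coe, EquivLike.coe_coe, aeval_algHom_apply e β f,
    Algebra.norm_eq_of_algEquiv]

theorem succ_mul_lCoeff_succ (f : F[X]) (n : ℕ) :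
    (n + 1) * lCoeff f (n + 1) =
      ∑ a ∈ antidiagonal n, lCoeff f a.1 * extCharSum p f a.2 := by
  classical
  let L (j : ℕ) := FiniteField.Extension F p (j + 1)
  have (j : ℕ) : Fintype (L j) := Fintype.ofFinite _
  have hL (j : ℕ) : Module.finrank F (L j) = j + 1 := FiniteField.finrank_extension _ _ _
  let N (g : F[X]) (j : ℕ) := (Finset.univ.filter fun β : L j => fieldCharpoly F β ∣ g).card
  have hterm : ∀ a ∈ antidiagonal n, lCoeff f a.1 * extCharSum p f a.2 =
      ∑ g ∈ monicsOfNatDegree F (n + 1), (N g a.2 : ℤ) * quadraticChar F (resultant g f) := by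
    intro a ha
    rw [extCharSum_eq_sum p (hL a.2), lCoeff_mul_sum_quadraticChar_norm, hL, ← add_assoc,
      mem_antidiagonal.1 ha]
  have hcount : ∀ g ∈ monicsOfNatDegree F (n + 1), ∑ a ∈ antidiagonal n, N g a.2 = n + 1 := by
    intro g hg
    obtain ⟨hmonic, hdeg⟩ := mem_monicsOfNatDegree.1 hg
    rw [← Finset.Nat.sum_antidiagonal_swap, Finset.Nat.sum_antidiagonal_eq_sum_range_succ_mk,
      Nat.succ_eq_add_one, ← hdeg]
    exact sum_card_filter_fieldCharpoly_dvd hL hmonic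
  rw [Finset.sum_congr rfl hterm, Finset.sum_comm, lCoeff, Finset.mul_sum]
  refine Finset.sum_congr rfl fun g hg => ?_
  rw [← Finset.sum_mul, ← Nat.cast_sum, hcount g hg, Nat.cast_add, Nat.cast_one]

end LFunction

section Vanishing

variable {F : Type*} [Field F]

theorem dvd_add_modByMonic_sub_mul (f g u : F[X]) : f ∣ g + (g * (u - 1)) %ₘ f - g * u :=
  ⟨-((g * (u - 1)) /ₘ f), by linear_combination modByMonic_add_div (g * (u - 1)) f⟩

theorem injective_add_modByMonic {f u : F[X]} (hf : f.Monic) (hfu : IsCoprime f u) :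
    Function.Injective fun g => g + (g * (u - 1)) %ₘ f := by
  intro g g' h
  have hsub : g - g' = ((g' - g) * (u - 1)) %ₘ f := by
    rw [sub_mul, sub_modByMonic]
    linear_combination h
  have hdvd : f ∣ (g - g') * u := by
    convert dvd_sub (dvd_add_modByMonic_sub_mul f g' u) (dvd_add_modByMonic_sub_mul f g u) using 1
    linear_combination h
  have hlt : (g - g').degree < f.degree := hsub ▸ degree_modByMonic_lt _ hf
  exact sub_eq_zero.1 (eq_zero_of_dvd_of_degree_lt (hfu.dvd_of_dvd_mul_right hdvd) hlt)

variable [Fintype F] [DecidableEq F]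

-- `g ↦ g + (g * (u - 1)) %ₘ f` permutes the monic polynomials of degree `n` and multiplies by `u`
-- modulo `f`; choosing `χ(u) = -1`, it changes the sign of every term of `lCoeff f n`.
theorem lCoeff_eq_zero_of_natDegree_le (hF : ringChar F ≠ 2) {f : F[X]} (hf : f.Monic)
    (hsq : Squarefree f) (hd : 0 < f.natDegree) {n : ℕ} (hn : f.natDegree ≤ n) :
    lCoeff f n = 0 := by
  obtain ⟨c, hc⟩ := quadraticChar_exists_neg_one hF
  obtain ⟨u, rfl⟩ := exists_resultant_eq hf hsq hd c
  have hfu : IsCoprime f u := by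
    by_contra h
    rw [resultant_eq_zero_iff.2 ⟨.inl hf.ne_zero, h⟩, quadraticChar_zero] at hc
    norm_num at hc
  set φ : F[X] → F[X] := fun g => g + (g * (u - 1)) %ₘ f
  have hmaps : ∀ g ∈ monicsOfNatDegree F n, φ g ∈ monicsOfNatDegree F n := by
    intro g hg
    obtain ⟨hmonic, hdeg⟩ := mem_monicsOfNatDegree.1 hg
    have hle : f.degree ≤ g.degree := by
      rw [degree_eq_natDegree hf.ne_zero, degree_eq_natDegree hmonic.ne_zero, hdeg]
      exact_mod_cast hn
    have hlt : ((g * (u - 1)) %ₘ f).degree < g.degree := (degree_modByMonic_lt _ hf).trans_le hle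
    exact mem_monicsOfNatDegree.2 ⟨hmonic.add_of_left hlt,
      (natDegree_add_eq_left_of_degree_lt hlt).trans hdeg⟩
  have hinj := (injective_add_modByMonic hf hfu).injOn (s := (monicsOfNatDegree F n : Set F[X]))
  have hneg : -lCoeff f n = lCoeff f n := by
    rw [lCoeff, ← Finset.sum_neg_distrib]
    refine Finset.sum_nbij φ hmaps hinj
      (Finset.surjOn_of_injOn_of_card_le _ hmaps hinj le_rfl) fun g hg => ?_
    have hdeg : (φ g).natDegree = g.natDegree :=
      (mem_monicsOfNatDegree.1 (hmaps g hg)).2.trans (mem_monicsOfNatDegree.1 hg).2.symm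
    have hdvd : f ∣ φ g - g * u := dvd_add_modByMonic_sub_mul f g u
    rw [resultant_eq_of_natDegree_eq_of_dvd_sub hf hdeg hdvd, map_mul, hc, mul_neg_one]
  lia

end Vanishing

section Weil

open Asymptotics Filter

variable {F : Type*} [Field F] [Fintype F] [DecidableEq F] {f : F[X]}

theorem abs_extCharSum_le (p : ℕ) [Fact p.Prime] [CharP F p] (hp2 : p ≠ 2) (hf : f.Monic)
    (hsep : f.Separable) (hd : 0 < f.natDegree) {j n : ℕ} (hj : j + 1 = 2 * n)
    (hbig : 2 * f.natDegree + 1 < Fintype.card F ^ n) :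
    |extCharSum p f j| ≤ (5 * f.natDegree + 1) * (Fintype.card F : ℤ) ^ n := by
  classical
  set K := FiniteField.Extension F p (j + 1)
  have : Fintype K := Fintype.ofFinite K
  have : CharP K p := charP_of_injective_algebraMap (algebraMap F K).injective p
  obtain ⟨e, -, he⟩ := FiniteField.card F p
  have hcardn : p ^ ((e : ℕ) * n) = Fintype.card F ^ n := by rw [pow_mul, ← he]
  have hcard : Fintype.card K = (p ^ ((e : ℕ) * n)) ^ 2 := by
    rw [← Nat.card_eq_fintype_card, FiniteField.natCard_extension, Nat.card_eq_fintype_card,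
      hcardn, hj, mul_comm, pow_mul]
  have hbound := abs_sum_quadraticChar_le_of_card_eq_sq p (e * n) hp2 hcard
    (hf.map (algebraMap F K)) hsep.map.squarefree (by rwa [natDegree_map])
    (by rwa [natDegree_map, hcardn])
  have hchar : ringChar F ≠ 2 := by rwa [ringChar.eq F p]
  rw [extCharSum_eq_sum p (FiniteField.finrank_extension F p (j + 1))]
  simpa only [quadraticChar_norm hchar, eval_map_algebraMap, natDegree_map, ← Nat.cast_pow,
    hcardn] using hbound

theorem exists_extCharSum_eq_neg_sum_pow (p : ℕ) [Fact p.Prime] [CharP F p] (hp2 : p ≠ 2)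
    (hf : f.Monic) (hsq : Squarefree f) (hd : 0 < f.natDegree) :
    ∃ s : Multiset ℂ, s.card < f.natDegree ∧
      ∀ j, (extCharSum p f j : ℂ) = -(s.map (· ^ (j + 1))).sum :=
  have hchar : ringChar F ≠ 2 := by rwa [ringChar.eq F p]
  exists_forall_eq_neg_sum_pow (A := fun n => (lCoeff f n : ℂ)) (by simp [lCoeff_zero])
    (fun n hn => by simp [lCoeff_eq_zero_of_natDegree_le hchar hf hsq hd hn])
    (fun n => by exact_mod_cast succ_mul_lCoeff_succ p f n)

theorem abs_sum_quadraticChar_le (hF : ringChar F ≠ 2) (hf : f.Monic) (hsep : f.Separable)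
    (hd : 0 < f.natDegree) :
    |((∑ x : F, quadraticChar F (f.eval x) : ℤ) : ℝ)| ≤
      (f.natDegree - 1) * √(Fintype.card F) := by
  obtain ⟨p, _⟩ := CharP.exists F
  have : Fact p.Prime := ⟨CharP.char_is_prime F p⟩
  have hp2 : p ≠ 2 := by rwa [← ringChar.eq F p]
  obtain ⟨s, hcard, hs⟩ := exists_extCharSum_eq_neg_sum_pow p hp2 hf hsep.squarefree hd
  have hcardF : 1 < Fintype.card F := Fintype.one_lt_card
  have hsquares : (fun n : ℕ => ((s.map (· ^ 2)).map (· ^ n)).sum) =O[atTop]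
      fun n => (Fintype.card F : ℝ) ^ n := by
    refine .of_bound (5 * f.natDegree + 1) ?_
    filter_upwards [eventually_ge_atTop (2 * f.natDegree + 1)] with n hn
    have hj : 2 * n - 1 + 1 = 2 * n := by omega
    have hsum : ((s.map (· ^ 2)).map (· ^ n)).sum = -(extCharSum p f (2 * n - 1) : ℂ) := by
      simp [hs, hj, pow_mul]
    have hbound := abs_extCharSum_le p hp2 hf hsep hd hj (hn.trans_lt (Nat.lt_pow_self hcardF))
    rw [hsum, norm_neg, Complex.norm_intCast, Real.norm_of_nonneg (by positivity)]
    exact_mod_cast hbound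
  have hroot : ∀ ω ∈ s, ‖ω‖ ≤ √(Fintype.card F) := fun ω hω => by
    have hsq := norm_le_of_mem_of_sum_pow_isBigO (by positivity) hsquares
      (Multiset.mem_map_of_mem (· ^ 2) hω)
    exact Real.le_sqrt_of_sq_le (by rwa [norm_pow] at hsq)
  have hbase : ((∑ x : F, quadraticChar F (f.eval x) : ℤ) : ℂ) = -s.sum := by
    simpa [extCharSum_eq_sum p (Module.finrank_self F), coe_aeval_eq_eval] using hs 0
  calc |((∑ x : F, quadraticChar F (f.eval x) : ℤ) : ℝ)| = ‖s.sum‖ := by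
        rw [← Complex.norm_intCast, hbase, norm_neg]
    _ ≤ (s.map fun ω => ‖ω‖).sum := norm_multiset_sum_le s
    _ ≤ s.card • √(Fintype.card F) := by
        simpa using Multiset.sum_le_card_nsmul (s.map fun ω => ‖ω‖) _ (by simpa using hroot)
    _ ≤ (f.natDegree - 1) * √(Fintype.card F) := by
        rw [nsmul_eq_mul]
        gcongr
        rw [le_sub_iff_add_le]
        exact_mod_cast hcard

end Weil

section Sieve

open Finset

theorem two_mul_sum_powerset_sum {ι R : Type*} [CommSemiring R] (s : Finset ι) (d : ι → R) :
    2 * ∑ T ∈ s.powerset, ∑ i ∈ T, d i = 2 ^ #s * ∑ i ∈ s, d i := by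
  classical
  induction s using Finset.induction with
  | empty => simp
  | insert j s hj ih =>
    have hsum : ∀ T ∈ s.powerset, ∑ i ∈ insert j T, d i = d j + ∑ i ∈ T, d i := fun T hT =>
      sum_insert fun hjT => hj (mem_powerset.1 hT hjT)
    rw [sum_powerset_insert hj, sum_congr rfl hsum, sum_add_distrib, sum_const, card_powerset,
      card_insert_of_notMem hj, sum_insert hj, nsmul_eq_mul, mul_add, mul_add, ih]
    push_cast
    ring

variable {F ι : Type*} [Field F] [Fintype F] [DecidableEq F] [Fintype ι]

theorem sum_prod_one_add_quadraticChar (ε : ι → ℤˣ) (G : ι → F[X]) :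
    ∑ a : F, ∏ i, (1 + ε i * quadraticChar F ((G i).eval a)) =
      ∑ T : Finset ι, ((∏ i ∈ T, ε i : ℤˣ) : ℤ) *
        ∑ a : F, quadraticChar F ((∏ i ∈ T, G i).eval a) := by
  classical
  simp only [prod_one_add, powerset_univ, prod_mul_distrib, eval_prod, map_prod, mul_sum,
    Units.coe_prod]
  exact sum_comm

variable {G : ι → F[X]}

theorem abs_sum_quadraticChar_prod_le (hF : ringChar F ≠ 2) (hG : ∀ i, (G i).Monic)
    (hd : ∀ i, 0 < (G i).natDegree) (hsep : (∏ i, G i).Separable) {T : Finset ι}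
    (hT : T.Nonempty) :
    |((∑ a : F, quadraticChar F ((∏ i ∈ T, G i).eval a) : ℤ) : ℝ)| ≤
      ((∏ i ∈ T, G i).natDegree - 1) * √(Fintype.card F) := by
  refine abs_sum_quadraticChar_le hF (monic_prod_of_monic T _ fun i _ => hG i)
    (hsep.of_dvd (prod_dvd_prod_of_subset T univ G (subset_univ T))) ?_
  rw [natDegree_prod_of_monic _ _ fun i _ => hG i]
  exact sum_pos (fun i _ => hd i) hT

theorem le_sum_prod_one_add_quadraticChar (ε : ι → ℤˣ) (hF : ringChar F ≠ 2)
    (hG : ∀ i, (G i).Monic) (hd : ∀ i, 0 < (G i).natDegree) (hsep : (∏ i, G i).Separable) :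
    Fintype.card F - (2 ^ Fintype.card ι * ((∏ i, G i).natDegree / 2 - 1 : ℝ) + 1) *
        √(Fintype.card F) ≤
      (∑ a : F, ∏ i, (1 + ε i * quadraticChar F ((G i).eval a)) : ℤ) := by
  classical
  set r := √(Fintype.card F : ℝ)
  have hdeg (T : Finset ι) :
      ((∏ i ∈ T, G i).natDegree : ℝ) = ∑ i ∈ T, ((G i).natDegree : ℝ) := by
    rw [natDegree_prod_of_monic _ _ fun i _ => hG i, Nat.cast_sum]
  let term (T : Finset ι) : ℝ := ((∏ i ∈ T, ε i : ℤˣ) : ℤ) *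
    (∑ a : F, quadraticChar F ((∏ i ∈ T, G i).eval a) : ℤ) +
      ((∏ i ∈ T, G i).natDegree - 1) * r
  have hterm_empty : term ∅ = Fintype.card F - r := by simp [term, sub_eq_add_neg]
  have hterm_nonneg (T : Finset ι) (hT : T ≠ ∅) : 0 ≤ term T := by
    have hweil := abs_le.1 <|
      abs_sum_quadraticChar_prod_le hF hG hd hsep (nonempty_iff_ne_empty.2 hT)
    rcases Int.units_eq_one_or (∏ i ∈ T, ε i) with h | h <;> simp only [term, h] <;>
      push_cast at hweil ⊢ <;> linarith
  have hsum_term : ∑ T, term T =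
      (∑ a : F, ∏ i, (1 + ε i * quadraticChar F ((G i).eval a)) : ℤ) +
        2 ^ Fintype.card ι * ((∏ i, G i).natDegree / 2 - 1 : ℝ) * r := by
    have hhalf := two_mul_sum_powerset_sum univ fun i => ((G i).natDegree : ℝ)
    rw [powerset_univ, card_univ] at hhalf
    simp only [term, sum_add_distrib, ← sum_mul, sum_sub_distrib, hdeg,
      sum_prod_one_add_quadraticChar]
    push_cast [sum_const, card_univ, Fintype.card_finset, nsmul_eq_mul]
    linear_combination r / 2 * hhalf
  have hle : term ∅ ≤ ∑ T, term T := by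
    rw [← add_sum_erase univ term (mem_univ ∅)]
    exact le_add_of_nonneg_right (sum_nonneg fun T hT => hterm_nonneg T (ne_of_mem_erase hT))
  linarith

theorem prod_one_add_quadraticChar_le {ε : ι → ℤˣ} {a : F}
    (ha : ∃ i, quadraticChar F ((G i).eval a) ≠ ε i) :
    ∏ i, (1 + ε i * quadraticChar F ((G i).eval a)) ≤
      if (∏ i, G i).eval a = 0 then 2 ^ Fintype.card ι else 0 := by
  have hfactor (i : ι) : |ε i * quadraticChar F ((G i).eval a)| ≤ 1 := by
    rw [abs_mul, Int.isUnit_iff_abs_eq.1 (ε i).isUnit, one_mul]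
    by_cases h : (G i).eval a = 0
    · simp [h]
    · rcases quadraticChar_dichotomy h with hχ | hχ <;> simp [hχ]
  split_ifs with h
  · rw [← card_univ, ← prod_const]
    exact prod_le_prod (fun i _ => by linarith [(abs_le.1 (hfactor i)).1])
      fun i _ => by linarith [(abs_le.1 (hfactor i)).2]
  · obtain ⟨i, hi⟩ := ha
    rw [eval_prod, ← ne_eq, prod_ne_zero_iff] at h
    refine (prod_eq_zero (mem_univ i) ?_).le
    rcases quadraticChar_dichotomy (h i (mem_univ i)) with hχ | hχ <;>
      rcases Int.units_eq_one_or (ε i) with hε | hε <;> simp_all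

theorem sum_prod_one_add_quadraticChar_le {ε : ι → ℤˣ} (hG : ∏ i, G i ≠ 0)
    (hε : ∀ a, ∃ i, quadraticChar F ((G i).eval a) ≠ ε i) :
    ∑ a : F, ∏ i, (1 + ε i * quadraticChar F ((G i).eval a)) ≤
      2 ^ Fintype.card ι * ((∏ i, G i).natDegree : ℤ) := by
  have hroots : #{a : F | (∏ i, G i).eval a = 0} ≤ (∏ i, G i).natDegree :=
    card_le_degree_of_subset_roots fun a ha => by simpa [mem_roots hG] using ha
  calc _ ≤ ∑ a : F, if (∏ i, G i).eval a = 0 then (2 ^ Fintype.card ι : ℤ) else 0 :=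
        sum_le_sum fun a _ => prod_one_add_quadraticChar_le (hε a)
    _ = 2 ^ Fintype.card ι * (#{a : F | (∏ i, G i).eval a = 0} : ℤ) := by
        rw [← sum_filter, sum_const, nsmul_eq_mul, mul_comm]
    _ ≤ 2 ^ Fintype.card ι * ((∏ i, G i).natDegree : ℤ) := by gcongr

theorem exists_forall_quadraticChar_eval_eq (ε : ι → ℤˣ) (hF : ringChar F ≠ 2)
    (hG : ∀ i, (G i).Monic) (hd : ∀ i, 0 < (G i).natDegree) (hsep : (∏ i, G i).Separable)
    (hcard : 2 ^ Fintype.card ι * ((∏ i, G i).natDegree : ℝ) < Fintype.card F -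
      (2 ^ Fintype.card ι * ((∏ i, G i).natDegree / 2 - 1 : ℝ) + 1) * √(Fintype.card F)) :
    ∃ a : F, ∀ i, quadraticChar F ((G i).eval a) = ε i := by
  by_contra! hε
  refine (hcard.trans_le (le_sum_prod_one_add_quadraticChar ε hF hG hd hsep)).not_ge ?_
  exact_mod_cast sum_prod_one_add_quadraticChar_le hsep.ne_zero hε

end Sieve

section Witness

variable {F : Type*} [Field F]

theorem isCoprime_of_mul_add_mul_eq_natCast {f g : F[X]} {n : ℕ} (hn : (n : F) ≠ 0) (c k : ℕ)
    (u v : F[X]) (hc : c ∣ n ^ k) (h : u * f + v * g = (c : F[X])) : IsCoprime f g := by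
  have hc0 : (c : F) ≠ 0 := by
    rintro h0
    obtain ⟨m, hm⟩ := hc
    exact pow_ne_zero k hn (by rw [← Nat.cast_pow, hm, Nat.cast_mul, h0, zero_mul])
  refine ⟨C (c : F)⁻¹ * u, C (c : F)⁻¹ * v, ?_⟩
  rw [mul_assoc, mul_assoc, ← mul_add, h, ← C_eq_natCast, ← C_mul, inv_mul_cancel₀ hc0, C_1]

-- The primes dividing `690` are those dividing a discriminant of one of the polynomials of
-- `conditionPoly` or a resultant of two of them.
theorem cast_690_ne_zero {p : ℕ} (hp : p.Prime) [CharP F p] (hp2 : p ≠ 2) (hp3 : p ≠ 3)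
    (hp5 : p ≠ 5) (hp23 : p ≠ 23) : ((690 : ℕ) : F) ≠ 0 := by
  rw [Ne, CharP.cast_eq_zero_iff F p, show 690 = 2 * 3 * 5 * 23 by rfl]
  simp only [hp.dvd_mul, Nat.prime_dvd_prime_iff_eq hp, Nat.prime_two, Nat.prime_three,
    Nat.prime_five, show Nat.Prime 23 by norm_num]
  tauto

variable (F) in
/-- The polynomials whose values at `a` are prescribed to be squares (indices `0, 1, 2`) or
non-squares (indices `3` to `7`). -/
noncomputable def conditionPoly : Fin 8 → F[X] :=
  ![X, X + 1, X ^ 3 - X - 1, X - 1, X ^ 2 + 1, X ^ 2 - X - 1, X ^ 2 + X + 1, X ^ 2 + X - 1]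

/-- The values prescribed for the quadratic character on `conditionPoly`: `1` for a square,
`-1` for a non-square. -/
def conditionSign : Fin 8 → ℤˣ := ![1, 1, 1, -1, -1, -1, -1, -1]

theorem conditionPoly_monic (i : Fin 8) : (conditionPoly F i).Monic := by
  fin_cases i <;> dsimp [conditionPoly] <;> monicity!

theorem natDegree_conditionPoly (i : Fin 8) :
    (conditionPoly F i).natDegree = ![1, 1, 3, 1, 2, 2, 2, 2] i := by
  fin_cases i <;> dsimp [conditionPoly] <;> compute_degree!

theorem natDegree_prod_conditionPoly : (∏ i, conditionPoly F i).natDegree = 14 := by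
  rw [natDegree_prod_of_monic _ _ fun i _ => conditionPoly_monic i]
  simp only [natDegree_conditionPoly]
  rfl

theorem separable_cubic_factors (h690 : ((690 : ℕ) : F) ≠ 0) :
    ((X ^ 3 - X) * (X ^ 3 - X - 1) : F[X]).Separable := by
  have hA : (X ^ 3 - X : F[X]).Separable :=
    isCoprime_of_mul_add_mul_eq_natCast h690 2 1 (-9 * X) (3 * X ^ 2 - 2) (by norm_num)
      (by simp [C_ofNat]; ring)
  have hB : (X ^ 3 - X - 1 : F[X]).Separable :=
    isCoprime_of_mul_add_mul_eq_natCast h690 23 1 (18 * X - 27) (-6 * X ^ 2 + 9 * X + 4)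
      (by norm_num) (by simp [C_ofNat]; ring)
  have hAB : IsCoprime (X ^ 3 - X : F[X]) (X ^ 3 - X - 1) :=
    isCoprime_of_mul_add_mul_eq_natCast h690 1 1 1 (-1) (by norm_num)
      (by push_cast; ring)
  exact hA.mul hB hAB

theorem separable_quadratic_factors (h690 : ((690 : ℕ) : F) ≠ 0) :
    ((X ^ 2 + 1) * (X ^ 4 - 3 * X ^ 2 + 1) * (X ^ 2 + X + 1) : F[X]).Separable := by
  have hC : (X ^ 2 + 1 : F[X]).Separable :=
    isCoprime_of_mul_add_mul_eq_natCast h690 2 1 2 (-X) (by norm_num)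
      (by simp; ring)
  have hQ : (X ^ 4 - 3 * X ^ 2 + 1 : F[X]).Separable :=
    isCoprime_of_mul_add_mul_eq_natCast h690 10 1 (-12 * X ^ 2 + 10) (3 * X ^ 3 - 7 * X)
      (by norm_num) (by simp [C_ofNat]; ring)
  have hE : (X ^ 2 + X + 1 : F[X]).Separable :=
    isCoprime_of_mul_add_mul_eq_natCast h690 3 1 4 (-2 * X - 1) (by norm_num)
      (by simp; ring)
  have hCQ : IsCoprime (X ^ 2 + 1 : F[X]) (X ^ 4 - 3 * X ^ 2 + 1) :=
    isCoprime_of_mul_add_mul_eq_natCast h690 5 1 (-X ^ 2 + 4) 1 (by norm_num)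
      (by push_cast; ring)
  have hCE : IsCoprime (X ^ 2 + 1 : F[X]) (X ^ 2 + X + 1) :=
    isCoprime_of_mul_add_mul_eq_natCast h690 1 1 (X + 1) (-X) (by norm_num)
      (by push_cast; ring)
  have hQE : IsCoprime (X ^ 4 - 3 * X ^ 2 + 1 : F[X]) (X ^ 2 + X + 1) :=
    isCoprime_of_mul_add_mul_eq_natCast h690 4 2 (-X) (X ^ 3 - X ^ 2 - 3 * X + 4) (by norm_num)
      (by push_cast; ring)
  exact (hC.mul hQ hCQ).mul hE (hCE.mul_left hQE)

theorem isCoprime_cubic_quadratic_factors (h690 : ((690 : ℕ) : F) ≠ 0) :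
    IsCoprime ((X ^ 3 - X) * (X ^ 3 - X - 1) : F[X])
      ((X ^ 2 + 1) * (X ^ 4 - 3 * X ^ 2 + 1) * (X ^ 2 + X + 1)) := by
  have hAC : IsCoprime (X ^ 3 - X : F[X]) (X ^ 2 + 1) :=
    isCoprime_of_mul_add_mul_eq_natCast h690 2 1 X (-X ^ 2 + 2) (by norm_num)
      (by push_cast; ring)
  have hAQ : IsCoprime (X ^ 3 - X : F[X]) (X ^ 4 - 3 * X ^ 2 + 1) :=
    isCoprime_of_mul_add_mul_eq_natCast h690 1 1 (2 * X ^ 3 - 5 * X) (-2 * X ^ 2 + 1) (by norm_num)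
      (by push_cast; ring)
  have hAE : IsCoprime (X ^ 3 - X : F[X]) (X ^ 2 + X + 1) :=
    isCoprime_of_mul_add_mul_eq_natCast h690 3 1 (X + 2) (-X ^ 2 - X + 3) (by norm_num)
      (by push_cast; ring)
  have hBC : IsCoprime (X ^ 3 - X - 1 : F[X]) (X ^ 2 + 1) :=
    isCoprime_of_mul_add_mul_eq_natCast h690 5 1 (2 * X - 1) (-2 * X ^ 2 + X + 4) (by norm_num)
      (by push_cast; ring)
  have hBQ : IsCoprime (X ^ 3 - X - 1 : F[X]) (X ^ 4 - 3 * X ^ 2 + 1) :=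
    isCoprime_of_mul_add_mul_eq_natCast h690 5 1 (-X ^ 3 + 3 * X ^ 2 + 4 * X - 7)
      (X ^ 2 - 3 * X - 2) (by norm_num) (by push_cast; ring)
  have hBE : IsCoprime (X ^ 3 - X - 1 : F[X]) (X ^ 2 + X + 1) :=
    isCoprime_of_mul_add_mul_eq_natCast h690 1 1 (X + 1) (-X ^ 2 + 2) (by norm_num)
      (by push_cast; ring)
  exact ((hAC.mul_right hAQ).mul_right hAE).mul_left ((hBC.mul_right hBQ).mul_right hBE)

-- Grouping the eight polynomials into five factors leaves only ten coprimality checks.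
theorem prod_conditionPoly : ∏ i, conditionPoly F i = ((X ^ 3 - X) * (X ^ 3 - X - 1)) *
    ((X ^ 2 + 1) * (X ^ 4 - 3 * X ^ 2 + 1) * (X ^ 2 + X + 1)) := by
  simp only [Fin.prod_univ_eight, conditionPoly, Matrix.cons_val]
  ring

theorem separable_prod_conditionPoly (h690 : ((690 : ℕ) : F) ≠ 0) :
    (∏ i, conditionPoly F i).Separable := by
  rw [prod_conditionPoly]
  exact (separable_cubic_factors h690).mul (separable_quadratic_factors h690)
    (isCoprime_cubic_quadratic_factors h690)

theorem ne_zero_and_isSquare_of_quadraticChar_eq_one [Fintype F] [DecidableEq F] {x : F}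
    (hx : quadraticChar F x = 1) : x ≠ 0 ∧ IsSquare x := by
  have hx0 : x ≠ 0 := by
    rintro rfl
    simp at hx
  exact ⟨hx0, (quadraticChar_one_iff_isSquare hx0).1 hx⟩

theorem exists_forall_quadraticChar_conditionPoly_eq [Fintype F] [DecidableEq F]
    (h690 : ((690 : ℕ) : F) ≠ 0) (hcard : 2400000 < Fintype.card F) :
    ∃ a : F, ∀ i, quadraticChar F ((conditionPoly F i).eval a) = conditionSign i := by
  have hF : ringChar F ≠ 2 := fun h => h690 ((ringChar.spec F 690).2 (by rw [h]; norm_num))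
  have hd (i : Fin 8) : 0 < (conditionPoly F i).natDegree := by
    rw [natDegree_conditionPoly]
    revert i
    decide
  refine exists_forall_quadraticChar_eval_eq _ hF conditionPoly_monic hd
    (separable_prod_conditionPoly h690) ?_
  have hcard' : (2400000 : ℝ) < Fintype.card F := by exact_mod_cast hcard
  have hsqrt : 1549 < √(Fintype.card F : ℝ) := Real.lt_sqrt_of_sq_lt (by linarith)
  have hsq : √(Fintype.card F : ℝ) ^ 2 = Fintype.card F := Real.sq_sqrt (by positivity)
  have hsieve : 3584 < (Fintype.card F : ℝ) - 1537 * √(Fintype.card F) := by nlinarith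
  rw [natDegree_prod_conditionPoly, Fintype.card_fin]
  norm_num
  linarith

end Witness

end QuadraticCharSum

open Polynomial QuadraticCharSum in
theorem exists_good_a_q1mod4_general (F : Type*) [Field F] [Fintype F] (p : ℕ) [CharP F p]
    (hp2 : p ≠ 2) (hp3 : p ≠ 3) (hp5 : p ≠ 5) (hp23 : p ≠ 23)
    (hbig : 2400000 < Fintype.card F) :
    ∃ a : F, a ≠ -1 ∧ a ≠ 0 ∧ a ≠ 1 ∧
      IsSquare a ∧ IsSquare (a + 1) ∧ IsSquare (a ^ 3 - a - 1) ∧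
      ¬ IsSquare (a - 1) ∧ ¬ IsSquare (a ^ 2 + 1) ∧
      ¬ IsSquare (a ^ 2 - a - 1) ∧ ¬ IsSquare (a ^ 2 + a + 1) ∧
      ¬ IsSquare (a ^ 2 + a - 1) := by
  classical
  obtain ⟨a, ha⟩ := exists_forall_quadraticChar_conditionPoly_eq
    (cast_690_ne_zero (CharP.char_is_prime F p) hp2 hp3 hp5 hp23) hbig
  simp only [conditionPoly, conditionSign, Fin.forall_fin_succ, Matrix.cons_val_zero,
    Matrix.cons_val_succ, Matrix.cons_val_fin_one, forall_const, eval_X, eval_one, eval_pow,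
    eval_add, eval_sub, Units.val_one, Units.val_neg, quadraticChar_neg_one_iff_not_isSquare] at ha
  obtain ⟨h0, h1, h2, h3, h4, h5, h6, h7⟩ := ha
  have ⟨ha0, hsq0⟩ := ne_zero_and_isSquare_of_quadraticChar_eq_one h0
  have ⟨ha1, hsq1⟩ := ne_zero_and_isSquare_of_quadraticChar_eq_one h1
  have ⟨_, hsq2⟩ := ne_zero_and_isSquare_of_quadraticChar_eq_one h2
  refine ⟨a, fun h => ha1 ?_, ha0, fun h => h3 ?_, hsq0, hsq1, hsq2, h3, h4, h5, h6, h7⟩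
  · rw [h, neg_add_cancel]
  · rw [h, sub_self]
    exact .zero

/-- For `q ≡ 1 (mod 4)` large, in characteristic `p ∉ {2,3,5,23}`, there exists
`a ∈ F_q` satisfying the square/non-square conditions of Theorem 2.4. -/
theorem exists_good_a_q1mod4 (F : Type*) [Field F] [Fintype F]
    (p q : ℕ) (hp : p.Prime) (hchar : CharP F p)
    (hp2 : p ≠ 2) (hp3 : p ≠ 3) (hp5 : p ≠ 5) (hp23 : p ≠ 23)
    (hq : Fintype.card F = q) (h4 : q % 4 = 1) (hbig : 2400000 < q) :
    ∃ a : F, a ≠ -1 ∧ a ≠ 0 ∧ a ≠ 1 ∧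
      IsSquare a ∧ IsSquare (a + 1) ∧ IsSquare (a ^ 3 - a - 1) ∧
      ¬ IsSquare (a - 1) ∧ ¬ IsSquare (a ^ 2 + 1) ∧
      ¬ IsSquare (a ^ 2 - a - 1) ∧ ¬ IsSquare (a ^ 2 + a + 1) ∧
      ¬ IsSquare (a ^ 2 + a - 1) :=
  exists_good_a_q1mod4_general F p hp2 hp3 hp5 hp23 (hq ▸ hbig)
end

section
/- Let q be a power of a prime p with p ∉ {2, 3, 5, 7, 23}, q ≡ 3 (mod 4), and q > 2.4·10⁶. Then there exists a ∈ F_q such that a ≠ −1, 0, 1, the elements a, a+1, a−1, a²+1, a³+a²−1 are squares in F_q, and the elements a²−a+1, a²+a+1, a²+a−1 are non-squares in F_q. -/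
/-!
Each condition fixes the quadratic character of the value at `a` of one of eight polynomials `gᵢ`.
Up to the contribution of the roots of the `gᵢ`, `∑ a, ∏ i, (1 + εᵢ χ(gᵢ(a)))` is `2 ^ 8` times the
number of good `a`. Expanding the product gives the main term `q` plus signed character sums of the
products of nonempty subfamilies of the `gᵢ`, which are squarefree, so each sum is `O(√q)` by the
Weil bound.

For the Weil bound, work first over a field with `r ^ 2` elements, `r` a power of the
characteristic. Counting dimensions yields a nonzero polynomial `A(X, X ^ r) + B(X, X ^ r) f ^ t`,
`t = (r - 1) / 2`, of degree `r ^ 2 / 2 + O(r)` that vanishes wherever `χ ∘ f` takes a given value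
`±1`; hence the character sum of `f` is `O(r)`. By quadratic reciprocity the `L`-function of `f`
over `F` is a polynomial of degree less than `deg f`, and the power sums of its inverse roots are,
up to sign, the character sums of `f` over the extensions of `F`. The bound over extensions of even
degree therefore forces every inverse root to have absolute value at most `√q`.
-/

open Polynomial

namespace WeilBound

section Bivariate

/-- `A`, seen as a polynomial in `Y` over `R[X]`, has degree at most `M` in `Y` and at most `L`
in `X`. -/
def HasBidegreeLE {R : Type*} [Semiring R] (A : R[X][X]) (M L : ℕ) : Prop :=
  A.natDegree ≤ M ∧ ∀ j, (A.coeff j).natDegree ≤ L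

lemma natDegree_coeff_mul_le {R : Type*} [Semiring R] {A B : R[X][X]} {k l : ℕ}
    (hA : ∀ j, (A.coeff j).natDegree ≤ k) (hB : ∀ j, (B.coeff j).natDegree ≤ l) (j : ℕ) :
    ((A * B).coeff j).natDegree ≤ k + l := by
  rw [coeff_mul]
  exact natDegree_sum_le_of_forall_le _ _ fun x _ =>
    natDegree_mul_le.trans (add_le_add (hA x.1) (hB x.2))

lemma natDegree_eval₂_le {R S : Type*} [Semiring R] [Semiring S] (φ : R →+* S[X]) (g : S[X])
    {A : R[X]} {M c : ℕ} (hA : A.natDegree ≤ M) (hφ : ∀ j, (φ (A.coeff j)).natDegree ≤ c) :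
    (A.eval₂ φ g).natDegree ≤ c + M * g.natDegree := by
  rw [eval₂_eq_sum_range]
  refine natDegree_sum_le_of_forall_le _ _ fun j hj => natDegree_mul_le.trans ?_
  have hjM : j ≤ M := by grind
  exact add_le_add (hφ j) (natDegree_pow_le.trans (Nat.mul_le_mul_right _ hjM))

lemma coeff_eval_X_pow {R : Type*} [CommSemiring R] {r : ℕ} {P : R[X][X]}
    (hP : ∀ j, (P.coeff j).natDegree < r) {i : ℕ} (hi : i < r) (j : ℕ) :
    (P.eval (X ^ r)).coeff (i + r * j) = (P.coeff j).coeff i := by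
  simp only [eval_eq_sum, Polynomial.sum, finsetSum_coeff, ← pow_mul, coeff_mul_X_pow']
  rw [Finset.sum_eq_single j]
  · simp
  · intro b _ hbj
    split_ifs with hb
    · refine coeff_eq_zero_of_natDegree_lt ((hP b).trans_le ?_)
      have hlt : b < j := by
        by_contra! hjb
        have := Nat.mul_le_mul_left r (show j + 1 ≤ b by omega)
        lia
      have := Nat.mul_le_mul_left r (show b + 1 ≤ j from hlt)
      lia
    · rfl
  · intro hj
    simp [notMem_support_iff.mp hj]

lemma eq_zero_of_eval_X_pow_eq_zero {R : Type*} [CommSemiring R] {r : ℕ} {P : R[X][X]}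
    (hP : ∀ j, (P.coeff j).natDegree < r) (h : P.eval (X ^ r) = 0) : P = 0 := by
  ext j i
  rcases lt_or_ge i r with hi | hi
  · simp [← coeff_eval_X_pow hP hi, h]
  · simp [coeff_eq_zero_of_natDegree_lt ((hP j).trans_le hi)]

-- A prime factor of `f` divides the two sides to an odd and to an even power, respectively.
lemma eq_zero_of_C_mul_sq_eq_mul_sq {R : Type*} [CommRing R] [IsDomain R]
    [UniqueFactorizationMonoid R] {f : R} (hf : Squarefree f) (hu : ¬ IsUnit f) {g : R[X]}
    (hg : g.Monic) {A B : R[X]} (h : C f * A ^ 2 = g * B ^ 2) : A = 0 ∧ B = 0 := by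
  have hA0_iff : A = 0 ↔ B = 0 := by
    constructor <;> rintro rfl <;> simpa [hf.ne_zero, hg.ne_zero] using h
  by_contra hAB
  have hA : A ≠ 0 := by tauto
  have hB : B ≠ 0 := by tauto
  obtain ⟨π, hπ, h₁, rfl⟩ := WfDvdMonoid.exists_irreducible_factor hu hf.ne_zero
  have hp : Prime (C π) := prime_C_iff.mpr hπ.prime
  have hh₁ : ¬ C π ∣ C h₁ := by
    intro hdvd
    have hdvd' : π ∣ h₁ := by simpa using C_dvd_iff_dvd_coeff _ _ |>.mp hdvd 0
    exact hπ.not_isUnit (hf π (mul_dvd_mul_left π hdvd'))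
  have hgπ : ¬ C π ∣ g := by
    intro hdvd
    have hdvd' := C_dvd_iff_dvd_coeff _ _ |>.mp hdvd g.natDegree
    rw [hg.coeff_natDegree] at hdvd'
    exact hπ.not_isUnit (isUnit_of_dvd_one hdvd')
  have hmult := congrArg (emultiplicity (C π)) h
  rw [C_mul, emultiplicity_mul hp, emultiplicity_mul hp, emultiplicity_mul hp, emultiplicity_pow hp,
    emultiplicity_pow hp, emultiplicity_eq_zero.mpr hh₁, emultiplicity_eq_zero.mpr hgπ,
    (FiniteMultiplicity.of_prime_left hp hp.ne_zero).emultiplicity_self,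
    (FiniteMultiplicity.of_prime_left hp hA).emultiplicity_eq_multiplicity,
    (FiniteMultiplicity.of_prime_left hp hB).emultiplicity_eq_multiplicity] at hmult
  have hparity : 1 + 0 + 2 * multiplicity (C π) A = 0 + 2 * multiplicity (C π) B := by
    exact_mod_cast hmult
  omega

lemma natCard_degreeLT {R : Type*} [Ring R] [Finite R] (n : ℕ) :
    Nat.card (degreeLT R n) = Nat.card R ^ n := by
  rw [Nat.card_congr (degreeLTEquiv R n).toEquiv, Nat.card_fun, Nat.card_fin]

instance {R : Type*} [Ring R] [Finite R] (n : ℕ) : Finite (degreeLT R n) :=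
  .of_equiv _ (degreeLTEquiv R n).toEquiv.symm

lemma natDegree_le_of_mem_degreeLT_succ {R : Type*} [Semiring R] {f : R[X]} {n : ℕ}
    (hf : f ∈ degreeLT R (n + 1)) : f.natDegree ≤ n := by
  rw [degreeLT_succ_eq_degreeLE, mem_degreeLE] at hf
  exact natDegree_le_of_degree_le hf

lemma mem_degreeLT_succ_of_natDegree_le {R : Type*} [Semiring R] {f : R[X]} {n : ℕ}
    (hf : f.natDegree ≤ n) : f ∈ degreeLT R (n + 1) := by
  rw [degreeLT_succ_eq_degreeLE, mem_degreeLE]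
  exact degree_le_of_natDegree_le hf

lemma HasBidegreeLE.sub {R : Type*} [Ring R] {A B : R[X][X]} {M L : ℕ}
    (hA : HasBidegreeLE A M L) (hB : HasBidegreeLE B M L) : HasBidegreeLE (A - B) M L :=
  ⟨(natDegree_sub_le _ _).trans (max_le hA.1 hB.1), fun j => by
    rw [coeff_sub]; exact (natDegree_sub_le _ _).trans (max_le (hA.2 j) (hB.2 j))⟩

lemma exists_injective_hasBidegreeLE (R : Type*) [Ring R] (M L : ℕ) :
    ∃ ι : (Fin (M + 1) → degreeLT R (L + 1)) → R[X][X],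
      Function.Injective ι ∧ ∀ a, HasBidegreeLE (ι a) M L := by
  let e := degreeLTEquiv R[X] (M + 1)
  refine ⟨fun a => e.symm fun j => a j, fun a b hab => ?_, fun a => ?_⟩
  · have hfun := e.symm.injective (Subtype.ext hab)
    exact funext fun j => Subtype.ext (congrFun hfun j)
  · have hM := natDegree_le_of_mem_degreeLT_succ (e.symm fun j => (a j : R[X])).2
    refine ⟨hM, fun j => ?_⟩
    rcases le_or_gt j M with hj | hj
    · have hcoeff : (e.symm fun j => (a j : R[X])).1.coeff j = a ⟨j, Nat.lt_succ_of_le hj⟩ :=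
        congrFun (e.apply_symm_apply fun j => (a j : R[X])) ⟨j, Nat.lt_succ_of_le hj⟩
      rw [hcoeff]
      exact natDegree_le_of_mem_degreeLT_succ (a _).2
    · simp [coeff_eq_zero_of_natDegree_lt (hM.trans_lt hj)]

end Bivariate

section Stepanov

variable {K : Type*} [Field K] (p s : ℕ) [Fact p.Prime] [CharP K p]

lemma eval_X_pow_map_iterateFrobenius (f : K[X]) :
    ((f.map (iterateFrobenius K p s)).map (C : K →+* K[X])).eval (X ^ p ^ s) = f ^ p ^ s := by
  have hexpand : expand K (p ^ s) (f.map (iterateFrobenius K p s)) = f ^ p ^ s := by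
    rw [← Polynomial.map_expand]
    exact map_iterateFrobenius_expand p f s
  rw [← hexpand, eval_map, expand_eq_sum, eval₂_eq_sum]

-- Squaring the relation eliminates `f ^ t` and leaves `f A² = f^(φ)(Y) B²` under `Y = X ^ r`.
lemma eq_zero_of_eval_X_pow_add_mul_pow_eq_zero {f : K[X]} (hf : Squarefree f) (hu : ¬ IsUnit f)
    (hm : f.Monic) {A B : K[X][X]} {L t : ℕ} (ht : p ^ s = 2 * t + 1)
    (hL : f.natDegree + 2 * L < p ^ s) (hA : ∀ j, (A.coeff j).natDegree ≤ L)
    (hB : ∀ j, (B.coeff j).natDegree ≤ L)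
    (h : A.eval (X ^ p ^ s) + B.eval (X ^ p ^ s) * f ^ t = 0) : A = 0 ∧ B = 0 := by
  set g : K[X][X] := (f.map (iterateFrobenius K p s)).map C with hg
  suffices hrel : C f * A ^ 2 = g * B ^ 2 from
    eq_zero_of_C_mul_sq_eq_mul_sq hf hu ((hm.map _).map _) hrel
  rw [← sub_eq_zero]
  refine eq_zero_of_eval_X_pow_eq_zero (r := p ^ s) (fun j => ?_) ?_
  · have hfA : ((C f * A ^ 2).coeff j).natDegree ≤ f.natDegree + (L + L) := by
      rw [coeff_C_mul, pow_two]
      exact natDegree_mul_le.trans (add_le_add_right (natDegree_coeff_mul_le hA hA j) _)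
    have hgB : ((g * B ^ 2).coeff j).natDegree ≤ 0 + (L + L) := by
      rw [pow_two]
      exact natDegree_coeff_mul_le (by simp [hg]) (natDegree_coeff_mul_le hB hB) j
    rw [coeff_sub]
    exact (natDegree_sub_le _ _).trans_lt (by omega)
  · rw [eval_sub, eval_mul, eval_mul, eval_C, eval_pow, eval_pow,
      eval_X_pow_map_iterateFrobenius, eq_neg_of_add_eq_zero_left h]
    conv_lhs => enter [2, 1]; rw [ht]
    ring

-- The pairs `(A, B)` outnumber the polynomials of degree less than the bound for the left side.
lemma exists_ne_zero_frobenius_relation [Finite K] (g : K[X]) {M L : ℕ}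
    (hlt : g.natDegree + p ^ s * L + M + 1 < 2 * ((L + 1) * (M + 1))) :
    ∃ A B : K[X][X], (A ≠ 0 ∨ B ≠ 0) ∧ HasBidegreeLE A M L ∧ HasBidegreeLE B M L ∧
      g * A.eval₂ (iterateFrobenius K[X] p s) X + B.eval₂ (iterateFrobenius K[X] p s) X = 0 := by
  obtain ⟨ι, hι, hbi⟩ := exists_injective_hasBidegreeLE K M L
  let V := (Fin (M + 1) → degreeLT K (L + 1)) × (Fin (M + 1) → degreeLT K (L + 1))
  let Ψ (v : V) : K[X] := g * (ι v.1).eval₂ (iterateFrobenius K[X] p s) X +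
    (ι v.2).eval₂ (iterateFrobenius K[X] p s) X
  have hdeg_eval₂ (a) :
      ((ι a).eval₂ (iterateFrobenius K[X] p s) X).natDegree ≤ p ^ s * L + M := by
    have := natDegree_eval₂_le (iterateFrobenius K[X] p s) X (hbi a).1 (c := p ^ s * L) fun j => by
      rw [iterateFrobenius_def]
      exact natDegree_pow_le.trans (Nat.mul_le_mul_left _ ((hbi a).2 j))
    simpa using this
  have hdeg (v) : (Ψ v).natDegree ≤ g.natDegree + (p ^ s * L + M) :=
    (natDegree_add_le _ _).trans (max_le (natDegree_mul_le.trans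
      (Nat.add_le_add_left (hdeg_eval₂ _) _)) ((hdeg_eval₂ _).trans (Nat.le_add_left _ _)))
  let Φ (v : V) : degreeLT K (g.natDegree + (p ^ s * L + M) + 1) :=
    ⟨Ψ v, mem_degreeLT_succ_of_natDegree_le (hdeg v)⟩
  have hcard : Nat.card (degreeLT K (g.natDegree + (p ^ s * L + M) + 1)) < Nat.card V := by
    rw [Nat.card_prod, Nat.card_fun, natCard_degreeLT, natCard_degreeLT, Nat.card_fin, ← pow_mul,
      ← pow_add]
    exact Nat.pow_lt_pow_right Finite.one_lt_card (by lia)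
  obtain ⟨u, v, hΦ, huv⟩ : ∃ u v, Φ u = Φ v ∧ u ≠ v :=
    Function.not_injective_iff.mp fun hinj =>
      hcard.not_ge (Nat.card_le_card_of_injective Φ hinj)
  have hΨ : Ψ u - Ψ v = 0 := sub_eq_zero.mpr (congrArg Subtype.val hΦ)
  refine ⟨ι u.1 - ι v.1, ι u.2 - ι v.2, ?_, (hbi _).sub (hbi _), (hbi _).sub (hbi _), ?_⟩
  · simp only [ne_eq, sub_eq_zero, hι.eq_iff]
    grind
  · rw [eval₂_sub, eval₂_sub, ← hΨ]
    ring

-- Raising to the power `p ^ s` turns `x ^ p ^ s` back into `x`.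
lemma eval_eval_X_pow_pow {x : K} (hx : x ^ (p ^ s) ^ 2 = x) (A : K[X][X]) :
    ((A.eval (X ^ p ^ s)).eval x) ^ p ^ s = (A.eval₂ (iterateFrobenius K[X] p s) X).eval x := by
  have hhom : ((iterateFrobenius K p s).comp (evalRingHom x)).comp (evalRingHom (X ^ p ^ s)) =
      (evalRingHom x).comp (eval₂RingHom (iterateFrobenius K[X] p s) X) := by
    ext <;> simp only [iterateFrobenius_def, RingHom.coe_comp, Function.comp_apply,
      coe_evalRingHom, eval_C, eval_X, eval_pow, coe_eval₂RingHom, eval₂_C, eval₂_X]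
    rw [← pow_mul, ← sq, hx]
  simpa [iterateFrobenius_def] using RingHom.congr_fun hhom A

lemma isRoot_of_frobenius_relation {x : K} (hx : x ^ (p ^ s) ^ 2 = x) {f : K[X]} {t : ℕ} {ε : K}
    (hε : ε ≠ 0) (hfx : f.eval x ^ (t * p ^ s + t) = ε) {A B : K[X][X]}
    (hAB : (C ε⁻¹ * f ^ t) * A.eval₂ (iterateFrobenius K[X] p s) X +
      B.eval₂ (iterateFrobenius K[X] p s) X = 0) :
    (A.eval (X ^ p ^ s) + B.eval (X ^ p ^ s) * f ^ t).IsRoot x := by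
  have hrel := congrArg (eval x) hAB
  simp only [eval_add, eval_mul, eval_C, eval_pow, eval_zero, ← eval_eval_X_pow_pow p s hx] at hrel
  rw [IsRoot.def, ← pow_eq_zero_iff (pow_ne_zero s (Fact.out : p.Prime).ne_zero), eval_add,
    eval_mul, eval_pow, add_pow_char_pow, mul_pow, ← pow_mul]
  have hft : f.eval x ^ (t * p ^ s) * f.eval x ^ t = ε := by rw [← pow_add, hfx]
  have hpow : f.eval x ^ (t * p ^ s) * ε⁻¹ * f.eval x ^ t = 1 := by
    rw [mul_right_comm, hft, mul_inv_cancel₀ hε]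
  linear_combination f.eval x ^ (t * p ^ s) * hrel - (A.eval (X ^ p ^ s)).eval x ^ p ^ s * hpow

lemma stepanov_parameters {r t d : ℕ} (ht : r = 2 * t + 1) (hd : 0 < d) (hdr : 2 * d ≤ r) :
    ∃ L, d + 2 * L < r ∧ t * d + r * L + (t + d) + 1 < 2 * ((L + 1) * (t + d + 1)) ∧
      2 * (L + r * (t + d) + t * d) ≤ r ^ 2 + 3 * d * r := by
  obtain ⟨L, e, hL, he⟩ : ∃ L e, 2 * (L + 1) + d = r + e ∧ e ≤ 1 :=
    ⟨(r + 1 - d) / 2 - 1, 1 - (r + 1 - d) % 2, by omega, by omega⟩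
  refine ⟨L, by omega, ?_, ?_⟩ <;> zify at *
  · nlinarith
  · nlinarith

lemma two_mul_card_eval_pow_eq_le [Fintype K] [DecidableEq K] {f : K[X]} (hf : Squarefree f)
    (hu : ¬ IsUnit f) (hm : f.Monic) (hcard : Fintype.card K = (p ^ s) ^ 2) {t : ℕ}
    (ht : p ^ s = 2 * t + 1) (hdr : 2 * f.natDegree ≤ p ^ s) {ε : K} (hε : ε ≠ 0) :
    2 * Finset.card {x : K | f.eval x ^ (Fintype.card K / 2) = ε} ≤
      (p ^ s) ^ 2 + 3 * f.natDegree * p ^ s := by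
  have hd : 0 < f.natDegree := hm.natDegree_pos_of_not_isUnit hu
  obtain ⟨L, hL, hlt, hle⟩ := stepanov_parameters ht hd hdr
  have hg : (C ε⁻¹ * f ^ t).natDegree = t * f.natDegree := by
    rw [natDegree_C_mul (inv_ne_zero hε), natDegree_pow]
  obtain ⟨A, B, hne, hA, hB, hAB⟩ := exists_ne_zero_frobenius_relation p s (C ε⁻¹ * f ^ t)
    (M := t + f.natDegree) (L := L) (by rw [hg]; exact hlt)
  set H := A.eval (X ^ p ^ s) + B.eval (X ^ p ^ s) * f ^ t
  have hH0 : H ≠ 0 := fun h => by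
    have := eq_zero_of_eval_X_pow_add_mul_pow_eq_zero p s hf hu hm ht hL hA.2 hB.2 h
    tauto
  have hdeg_eval {P : K[X][X]} (hP : HasBidegreeLE P (t + f.natDegree) L) :
      (P.eval (X ^ p ^ s)).natDegree ≤ L + p ^ s * (t + f.natDegree) := by
    have := natDegree_eval₂_le (.id K[X]) (X ^ p ^ s) hP.1 hP.2
    rwa [natDegree_X_pow, mul_comm _ (p ^ s)] at this
  have hdegH : H.natDegree ≤ L + p ^ s * (t + f.natDegree) + t * f.natDegree :=
    (natDegree_add_le _ _).trans (max_le ((hdeg_eval hA).trans (Nat.le_add_right _ _))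
      (natDegree_mul_le.trans (add_le_add (hdeg_eval hB) natDegree_pow_le)))
  have hhalf : Fintype.card K / 2 = t * p ^ s + t := by
    rw [hcard, ht, show (2 * t + 1) ^ 2 = 2 * (t * (2 * t + 1) + t) + 1 by ring]
    omega
  have hroots : ({x : K | f.eval x ^ (Fintype.card K / 2) = ε} : Finset K) ⊆ H.roots.toFinset := by
    intro x hx
    simp only [Finset.mem_filter, Finset.mem_univ, true_and, hhalf] at hx
    rw [Multiset.mem_toFinset, mem_roots hH0]
    exact isRoot_of_frobenius_relation p s (hcard ▸ FiniteField.pow_card x) hε hx hAB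
  calc 2 * Finset.card {x : K | f.eval x ^ (Fintype.card K / 2) = ε}
      ≤ 2 * H.natDegree := Nat.mul_le_mul_left 2 <| (Finset.card_le_card hroots).trans <|
        (Multiset.toFinset_card_le _).trans (card_roots' H)
    _ ≤ 2 * (L + p ^ s * (t + f.natDegree) + t * f.natDegree) := Nat.mul_le_mul_left 2 hdegH
    _ ≤ (p ^ s) ^ 2 + 3 * f.natDegree * p ^ s := hle

lemma card_eval_eq_zero_le {R : Type*} [CommRing R] [IsDomain R] [Fintype R] [DecidableEq R]
    {f : R[X]} (hf : f ≠ 0) : Finset.card {x : R | f.eval x = 0} ≤ f.natDegree :=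
  card_le_degree_of_subset_roots fun x hx => by simpa [hf] using hx

lemma unit_mul_quadraticChar [Fintype K] [DecidableEq K] (hK : ringChar K ≠ 2) (ε : ℤˣ) (a : K) :
    (ε : ℤ) * quadraticChar K a =
      2 * (if a ^ (Fintype.card K / 2) = ((ε : ℤ) : K) then 1 else 0) - 1 +
        if a = 0 then 1 else 0 := by
  have hne : (-1 : K) ≠ 1 := Ring.neg_one_ne_one_of_char_ne_two hK
  have hhalf : Fintype.card K / 2 ≠ 0 := by
    have := Fintype.one_lt_card (α := K)
    omega
  rcases eq_or_ne a 0 with rfl | ha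
  · rcases Int.units_eq_one_or ε with rfl | rfl <;> simp [hhalf]
  rw [quadraticChar_eq_pow_of_char_ne_two hK ha]
  rcases FiniteField.pow_dichotomy hK ha with h | h <;>
    rcases Int.units_eq_one_or ε with rfl | rfl <;> simp [h, ha, hne, hne.symm]

lemma abs_sum_quadraticChar_le_of_card_eq_sq [Fintype K] [DecidableEq K] (hp : p ≠ 2) {f : K[X]}
    (hf : Squarefree f) (hu : ¬ IsUnit f) (hm : f.Monic) (hcard : Fintype.card K = (p ^ s) ^ 2)
    (hdr : 2 * f.natDegree ≤ p ^ s) :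
    |∑ x, quadraticChar K (f.eval x)| ≤ 4 * f.natDegree * p ^ s := by
  have hK : ringChar K ≠ 2 := ringChar.eq K p ▸ hp
  obtain ⟨t, ht⟩ := ((Fact.out : p.Prime).odd_of_ne_two hp).pow (n := s)
  have hzeros := card_eval_eq_zero_le hm.ne_zero
  have hbound (ε : ℤˣ) : ε * ∑ x, quadraticChar K (f.eval x) ≤ 4 * f.natDegree * p ^ s := by
    have hε : ((ε : ℤ) : K) ≠ 0 := by
      rcases Int.units_eq_one_or ε with rfl | rfl <;> simp
    have hcount := two_mul_card_eval_pow_eq_le p s hf hu hm hcard ht hdr hε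
    have hpos := Nat.le_mul_of_pos_right f.natDegree (pow_pos (Fact.out : p.Prime).pos s)
    rw [Finset.mul_sum]
    simp only [unit_mul_quadraticChar hK, Finset.sum_add_distrib,
      Finset.sum_sub_distrib, ← Finset.mul_sum, Finset.sum_boole, Finset.sum_const,
      Finset.card_univ, nsmul_eq_mul, mul_one]
    zify at hcount hzeros hpos hcard
    linarith
  exact abs_le.mpr ⟨by simpa using neg_le_neg (hbound (-1)), by simpa using hbound 1⟩

end Stepanov

section Symbol

lemma quadraticChar_norm {F K : Type*} [Field F] [Fintype F] [DecidableEq F] [Field K] [Fintype K]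
    [DecidableEq K] [Algebra F K] (hF : ringChar F ≠ 2) (z : K) :
    quadraticChar F (Algebra.norm F z) = quadraticChar K z := by
  have hsq {w : K} (hw : w ≠ 0) (h : quadraticChar K w = 1) :
      quadraticChar F (Algebra.norm F w) = 1 := by
    obtain ⟨v, rfl⟩ := (quadraticChar_one_iff_isSquare hw).mp h
    have hv : v ≠ 0 := left_ne_zero_of_mul hw
    rw [map_mul, ← sq, quadraticChar_sq_one' (Algebra.norm_ne_zero_iff.mpr hv)]
  rcases eq_or_ne z 0 with rfl | hz
  · simp
  rcases quadraticChar_dichotomy hz with h | h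
  · rw [h, hsq hz h]
  obtain ⟨c, hc⟩ := quadraticChar_exists_neg_one hF
  obtain ⟨w, rfl⟩ := FiniteField.norm_surjective F K c
  have hw : w ≠ 0 := by rintro rfl; simp at hc
  have hχw : quadraticChar K w = -1 := (quadraticChar_dichotomy hw).resolve_left fun h1 => by
    simp [hsq hw h1] at hc
  have hzw := hsq (mul_ne_zero hz hw) (by rw [map_mul, h, hχw]; rfl)
  rw [map_mul, map_mul, hc] at hzw
  linarith

lemma resultant_minpoly_gen {F L : Type*} [Field F] [Field L] [Algebra F L]
    [Algebra.IsSeparable F L] (pb : PowerBasis F L) (f : F[X]) :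
    resultant (minpoly F pb.gen) f = Algebra.norm F (aeval pb.gen f) := by
  classical
  have := pb.finite
  let E := AlgebraicClosure F
  have hsep : (minpoly F pb.gen).Separable := Algebra.IsSeparable.isSeparable F pb.gen
  have hm : (minpoly F pb.gen).Monic := minpoly.monic pb.isIntegral_gen
  apply (algebraMap F E).injective
  rw [← resultant_map_map, ← natDegree_map (algebraMap F E) (p := minpoly F pb.gen),
    resultant_eq_prod_eval _ _ _ natDegree_map_le (IsAlgClosed.splits _), (hm.map _).leadingCoeff,
    one_pow, one_mul, Algebra.norm_eq_prod_embeddings F E,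
    Fintype.prod_equiv pb.liftEquiv' (fun σ : L →ₐ[F] E => σ (aeval pb.gen f))
      (fun y => eval (y : E) (f.map (algebraMap F E))) fun σ => by
        rw [PowerBasis.liftEquiv'_apply_coe, eval_map_algebraMap, aeval_algHom_apply],
    Finset.prod_mem_multiset _ _ (fun y => eval (y : E) (f.map (algebraMap F E))) fun _ => rfl,
    Finset.prod_eq_multiset_prod, Multiset.toFinset_val,
    Multiset.dedup_eq_self.mpr (nodup_roots hsep.map)]

variable {F : Type*} [Field F] [Fintype F] [DecidableEq F]

/-- The Jacobi symbol `(a / b)` of polynomials over a finite field, for monic `b`. It is the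
quadratic character of `∏ a(β)`, taken over the roots `β` of `b`, and this product is the
resultant of `b` and `a`. -/
noncomputable def polyJacobiSym (a b : F[X]) : ℤ := quadraticChar F (resultant b a)

lemma polyJacobiSym_mul_right (a : F[X]) {b c : F[X]} (hb : b.Monic) (hc : c.Monic) :
    polyJacobiSym a (b * c) = polyJacobiSym a b * polyJacobiSym a c := by
  rw [polyJacobiSym, hb.natDegree_mul hc, resultant_mul_left _ _ _ _ le_rfl, map_mul]
  rfl

lemma polyJacobiSym_eq_resultant_of_le {a b : F[X]} (hb : b.Monic) {n : ℕ}
    (hn : a.natDegree ≤ n) : polyJacobiSym a b = quadraticChar F (resultant b a b.natDegree n) := by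
  obtain ⟨c, rfl⟩ := Nat.exists_eq_add_of_le hn
  rw [resultant_add_right_deg _ _ _ _ _ le_rfl, coeff_natDegree, hb.leadingCoeff, one_pow, one_mul]
  rfl

lemma polyJacobiSym_mul_left (a a' : F[X]) {b : F[X]} (hb : b.Monic) :
    polyJacobiSym (a * a') b = polyJacobiSym a b * polyJacobiSym a' b := by
  rw [polyJacobiSym_eq_resultant_of_le hb natDegree_mul_le, resultant_mul_right _ _ _ _ le_rfl,
    map_mul]
  rfl

lemma polyJacobiSym_one_left (b : F[X]) : polyJacobiSym 1 b = 1 := by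
  simp [polyJacobiSym]

lemma polyJacobiSym_add_mul_left (a c : F[X]) {b : F[X]} (hb : b.Monic) :
    polyJacobiSym (a + b * c) b = polyJacobiSym a b := by
  set n := max a.natDegree (c.natDegree + b.natDegree)
  have ha : a.natDegree ≤ n := le_max_left _ _
  have hbc : c.natDegree + b.natDegree ≤ n := le_max_right _ _
  have hsum : (a + b * c).natDegree ≤ n :=
    (natDegree_add_le _ _).trans (max_le ha (natDegree_mul_le.trans (by omega)))
  rw [polyJacobiSym_eq_resultant_of_le hb hsum, polyJacobiSym_eq_resultant_of_le hb ha,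
    resultant_add_mul_right _ _ _ _ _ hbc le_rfl]

lemma polyJacobiSym_congr_left {a a' b : F[X]} (hb : b.Monic) (h : b ∣ a - a') :
    polyJacobiSym a b = polyJacobiSym a' b := by
  obtain ⟨c, hc⟩ := h
  rw [← polyJacobiSym_add_mul_left a' c hb, ← hc, add_sub_cancel]

lemma polyJacobiSym_comm (a b : F[X]) :
    polyJacobiSym a b =
      quadraticChar F ((-1) ^ (b.natDegree * a.natDegree)) * polyJacobiSym b a := by
  rw [polyJacobiSym, resultant_comm, map_mul]
  rfl

lemma polyJacobiSym_eq_zero_of_not_isCoprime {a b : F[X]} (hb : b.Monic) (h : ¬ IsCoprime b a) :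
    polyJacobiSym a b = 0 := by
  rw [polyJacobiSym, resultant_eq_zero_iff.mpr ⟨Or.inl hb.ne_zero, h⟩, quadraticChar_zero]

lemma exists_polyJacobiSym_eq_neg_one_of_irreducible (hF : ringChar F ≠ 2) {π : F[X]}
    (hπ : Irreducible π) (hm : π.Monic) : ∃ u, polyJacobiSym u π = -1 := by
  have : Fact (Irreducible π) := ⟨hπ⟩
  let pb := AdjoinRoot.powerBasis hπ.ne_zero
  have := pb.finite
  have : Finite (AdjoinRoot π) := Module.finite_of_finite F
  obtain ⟨c, hc⟩ := quadraticChar_exists_neg_one hF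
  obtain ⟨w, rfl⟩ := FiniteField.norm_surjective F (AdjoinRoot π) c
  obtain ⟨u, rfl⟩ := AdjoinRoot.mk_surjective w
  refine ⟨u, ?_⟩
  rw [polyJacobiSym, ← hc]
  congr 1
  have hres := resultant_minpoly_gen pb u
  rwa [AdjoinRoot.minpoly_powerBasis_gen_of_monic hm, AdjoinRoot.powerBasis_gen,
    AdjoinRoot.aeval_eq] at hres

lemma exists_polyJacobiSym_eq_neg_one (hF : ringChar F ≠ 2) {f : F[X]} (hm : f.Monic)
    (hf : Squarefree f) (hu : ¬ IsUnit f) : ∃ z, polyJacobiSym z f = -1 := by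
  obtain ⟨π, hπm, hπ, h, rfl⟩ := exists_monic_irreducible_factor f hu
  have hhm : h.Monic := hπm.of_mul_monic_left hm
  obtain ⟨u, hu⟩ := exists_polyJacobiSym_eq_neg_one_of_irreducible hF hπ hπm
  obtain ⟨v, w, hvw⟩ : IsCoprime π h := (squarefree_mul_iff.mp hf).1.isCoprime
  refine ⟨u * (w * h) + v * π, ?_⟩
  have hmodπ : π ∣ u * (w * h) + v * π - u := ⟨v - u * v, by linear_combination u * hvw⟩
  have hmodh : h ∣ u * (w * h) + v * π - 1 := ⟨u * w - w, by linear_combination hvw⟩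
  rw [polyJacobiSym_mul_right _ hπm hhm, polyJacobiSym_congr_left hπm hmodπ,
    polyJacobiSym_congr_left hhm hmodh, hu, polyJacobiSym_one_left h, mul_one]

end Symbol

open IntermediateField in
/-- The characteristic polynomial over `F` of multiplication by `x` on the finite extension `K`,
written as the power of the minimal polynomial that has degree `[K : F]`. -/
noncomputable def elemCharpoly (F : Type*) {K : Type*} [Field F] [Field K] [Algebra F K] (x : K) :
    F[X] :=
  minpoly F x ^ Module.finrank F⟮x⟯ K

section CharacteristicPolynomial

variable {F K : Type*} [Field F] [Field K] [Algebra F K]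

section

variable [FiniteDimensional F K]

lemma monic_elemCharpoly (x : K) : (elemCharpoly F x).Monic :=
  (minpoly.monic (.of_finite F x)).pow _

open IntermediateField in
lemma finrank_adjoin_mul_natDegree_minpoly (x : K) :
    Module.finrank F⟮x⟯ K * (minpoly F x).natDegree = Module.finrank F K := by
  rw [← adjoin.finrank (.of_finite F x), mul_comm, Module.finrank_mul_finrank]

lemma natDegree_elemCharpoly (x : K) : (elemCharpoly F x).natDegree = Module.finrank F K := by
  rw [elemCharpoly, natDegree_pow, finrank_adjoin_mul_natDegree_minpoly]

open IntermediateField in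
lemma resultant_elemCharpoly [Algebra.IsSeparable F K] (f : F[X]) (x : K) :
    resultant (elemCharpoly F x) f = Algebra.norm F (aeval x f) := by
  have hx : IsIntegral F x := .of_finite F x
  set pb := adjoin.powerBasis hx
  have hgen : algebraMap F⟮x⟯ K pb.gen = x := by
    rw [adjoin.powerBasis_gen]
    exact AdjoinSimple.algebraMap_gen F x
  have hmin : minpoly F pb.gen = minpoly F x := by
    rw [← minpoly.algebraMap_eq (A := F) (algebraMap F⟮x⟯ K).injective, hgen]
  have haeval : aeval x f = algebraMap F⟮x⟯ K (aeval pb.gen f) := by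
    rw [← aeval_algebraMap_apply, hgen]
  rw [elemCharpoly, resultant_pow_left _ _ _ _ (by simp [minpoly.monic hx]) le_rfl, haeval,
    ← Algebra.norm_norm (S := F⟮x⟯), Algebra.norm_algebraMap, map_pow,
    ← resultant_minpoly_gen pb, hmin]

-- The two conditions on the left say that `elemCharpoly F x` is `P ^ (multiplicity P g + 1)`,
-- up to a unit.
lemma elemCharpoly_dvd_mul_and_not_dvd_iff {P g : F[X]} (hP : Irreducible P) (hg : g ≠ 0) (x : K) :
    (elemCharpoly F x ∣ P * g ∧ ¬ elemCharpoly F x ∣ g) ↔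
      Module.finrank F K = (multiplicity P g + 1) * P.natDegree ∧ aeval x P = 0 := by
  have hirr : Irreducible (minpoly F x) := minpoly.irreducible (.of_finite F x)
  have hpos := minpoly.natDegree_pos (IsIntegral.of_finite F x)
  have hfinrank := finrank_adjoin_mul_natDegree_minpoly (F := F) x
  obtain ⟨e, he⟩ := Nat.exists_eq_succ_of_ne_zero
    (left_ne_zero_of_mul (hfinrank.trans_ne Module.finrank_pos.ne'))
  rw [← hfinrank, elemCharpoly, he, Nat.succ_eq_add_one]
  by_cases hxP : aeval x P = 0
  · have hassoc : Associated (minpoly F x) P := hirr.associated_of_dvd hP (minpoly.dvd F x hxP)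
    have hmult : FiniteMultiplicity (minpoly F x) g :=
      FiniteMultiplicity.of_prime_left hirr.prime hg
    have hdvd : minpoly F x ^ (e + 1) ∣ P * g ↔ minpoly F x ^ e ∣ g := by
      rw [(hassoc.symm.mul_right g).dvd_iff_dvd_right, pow_succ',
        mul_dvd_mul_iff_left hirr.ne_zero]
    rw [hdvd, hmult.pow_dvd_iff_le_multiplicity, hmult.pow_dvd_iff_le_multiplicity,
      ← natDegree_eq_of_degree_eq (degree_eq_degree_of_associated hassoc),
      ← multiplicity_eq_of_associated_left hassoc, Nat.mul_left_inj hpos.ne']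
    simp only [hxP, and_true]
    omega
  · have hcop : IsCoprime (minpoly F x) P :=
      hirr.coprime_iff_not_dvd.mpr fun h => hxP (minpoly.dvd_iff.mp h)
    have hdvd : minpoly F x ^ (e + 1) ∣ P * g → minpoly F x ^ (e + 1) ∣ g :=
      hcop.pow_left.dvd_of_dvd_mul_left
    tauto

lemma not_isUnit_elemCharpoly (x : K) : ¬ IsUnit (elemCharpoly F x) :=
  not_isUnit_of_natDegree_pos _ (natDegree_elemCharpoly (F := F) x ▸ Module.finrank_pos)

end

lemma polyJacobiSym_elemCharpoly [Fintype F] [DecidableEq F] [Fintype K] [DecidableEq K]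
    (hF : ringChar F ≠ 2) (f : F[X]) (x : K) :
    polyJacobiSym f (elemCharpoly F x) = quadraticChar K (aeval x f) := by
  rw [polyJacobiSym, resultant_elemCharpoly, quadraticChar_norm hF]

variable [Finite F] [Finite K]

lemma ncard_aeval_eq_zero {P : F[X]} (hP : Irreducible P)
    (hdvd : P.natDegree ∣ Module.finrank F K) : {x : K | aeval x P = 0}.ncard = P.natDegree := by
  have := Fintype.ofFinite K
  have hcard : Nat.card F ^ Module.finrank F K = Fintype.card K := by
    rw [← Nat.card_eq_fintype_card, Module.natCard_eq_pow_finrank (K := F) (V := K)]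
  have hP_dvd := hcard ▸ hP.natDegree_dvd_iff_dvd_X_pow_card_pow_sub_X.mp hdvd
  have hsplits : (P.map (algebraMap F K)).Splits :=
    (FiniteField.isSplittingField_sub K F).splits.of_dvd
      (map_ne_zero (FiniteField.X_pow_card_sub_X_ne_zero F Fintype.one_lt_card))
      (Polynomial.map_dvd _ hP_dvd)
  rw [← card_rootSet_eq_natDegree (PerfectField.separable_of_irreducible hP) hsplits,
    ← Nat.card_eq_fintype_card, Nat.card_coe_set_eq]
  congr 1
  ext x
  simp [mem_rootSet, hP.ne_zero]

open Classical in
lemma ncard_elemCharpoly_dvd_mul {P g : F[X]} (hP : Irreducible P) (hg : g ≠ 0) :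
    {x : K | elemCharpoly F x ∣ P * g}.ncard = {x : K | elemCharpoly F x ∣ g}.ncard +
      if Module.finrank F K = (multiplicity P g + 1) * P.natDegree then P.natDegree else 0 := by
  have hsub : {x : K | elemCharpoly F x ∣ g} ⊆ {x : K | elemCharpoly F x ∣ P * g} :=
    fun x hx => hx.mul_left P
  have hdiff : {x : K | elemCharpoly F x ∣ P * g} \ {x : K | elemCharpoly F x ∣ g} =
      {x : K | Module.finrank F K = (multiplicity P g + 1) * P.natDegree ∧ aeval x P = 0} :=
    Set.ext fun x => elemCharpoly_dvd_mul_and_not_dvd_iff hP hg x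
  rw [← Set.ncard_sdiff_add_ncard_of_subset hsub, hdiff, add_comm]
  split_ifs with h
  · simp only [h, true_and, ncard_aeval_eq_zero hP (h ▸ Dvd.intro_left _ rfl)]
  · simp [h]

end CharacteristicPolynomial

section Extension

variable {F : Type*} [Field F] [Finite F] (p : ℕ) [Fact p.Prime] [CharP F p]

noncomputable instance (n : ℕ) : Fintype (FiniteField.Extension F p n) := Fintype.ofFinite _

noncomputable instance (n : ℕ) : DecidableEq (FiniteField.Extension F p n) := Classical.decEq _

-- Each irreducible factor `P` of `g`, counted with multiplicity, contributes its `deg P` roots.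
lemma sum_ncard_elemCharpoly_dvd {g : F[X]} (hg : g ≠ 0) {n : ℕ} (hn : g.natDegree ≤ n) :
    ∑ k ∈ Finset.range n, {x : FiniteField.Extension F p (k + 1) | elemCharpoly F x ∣ g}.ncard =
      g.natDegree := by
  induction g using WfDvdMonoid.induction_on_irreducible with
  | zero => exact absurd rfl hg
  | unit u hu =>
    rw [natDegree_eq_zero_of_isUnit hu]
    refine Finset.sum_eq_zero fun k _ => ?_
    rw [Set.ncard_eq_zero, Set.eq_empty_iff_forall_notMem]
    exact fun x hx => not_isUnit_elemCharpoly x (isUnit_of_dvd_unit hx hu)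
  | mul g P hg0 hP ih =>
    rw [natDegree_mul hP.ne_zero hg0] at hn ⊢
    have hmult : multiplicity P g * P.natDegree ≤ g.natDegree := by
      rw [← natDegree_pow]
      exact natDegree_le_of_dvd (pow_multiplicity_dvd _ _) hg0
    have hpos := hP.natDegree_pos
    obtain ⟨m, hm⟩ : ∃ m, m + 1 = (multiplicity P g + 1) * P.natDegree :=
      Nat.exists_add_one_eq.mpr (by positivity)
    have hmn : m ∈ Finset.range n := by
      rw [Finset.mem_range]
      lia
    simp only [ncard_elemCharpoly_dvd_mul hP hg0, FiniteField.finrank_extension, ← hm,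
      Nat.add_right_cancel_iff, Finset.sum_add_distrib, ih hg0 (by omega), Finset.sum_ite_eq',
      if_pos hmn, add_comm]

end Extension

section LFunction

variable {F : Type*} [Field F]

section

variable [Finite F]

lemma finite_monic_natDegree_eq (n : ℕ) : {g : F[X] | g.Monic ∧ g.natDegree = n}.Finite :=
  have hfin : (degreeLT F (n + 1) : Set F[X]).Finite :=
    inferInstanceAs (Finite (degreeLT F (n + 1)))
  hfin.subset fun _ hg => mem_degreeLT_succ_of_natDegree_le hg.2.le

variable (F) in
/-- The monic polynomials of degree `n` over a finite field. -/
noncomputable def monicsOfDegree (n : ℕ) : Finset F[X] := (finite_monic_natDegree_eq n).toFinset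

lemma mem_monicsOfDegree {n : ℕ} {g : F[X]} :
    g ∈ monicsOfDegree F n ↔ g.Monic ∧ g.natDegree = n := by
  simp [monicsOfDegree]

open Classical in
lemma sum_monicsOfDegree_mul {M : Type*} [AddCommMonoid M] {h : F[X]} (hh : h.Monic) (n : ℕ)
    (w : F[X] → M) :
    ∑ g ∈ monicsOfDegree F n, w (h * g) =
      ∑ g ∈ monicsOfDegree F (h.natDegree + n) with h ∣ g, w g := by
  refine Finset.sum_bij (fun g _ => h * g) (fun g hg => ?_)
    (fun g _ g' _ hgg' => mul_left_cancel₀ hh.ne_zero hgg') (fun g hg => ?_) fun _ _ => rfl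
  · rw [mem_monicsOfDegree] at hg
    rw [Finset.mem_filter, mem_monicsOfDegree, hh.natDegree_mul hg.1, hg.2]
    exact ⟨⟨hh.mul hg.1, rfl⟩, dvd_mul_right _ _⟩
  · rw [Finset.mem_filter, mem_monicsOfDegree] at hg
    obtain ⟨⟨hgm, hgd⟩, g', rfl⟩ := hg
    have hg'm : g'.Monic := hh.of_mul_monic_left hgm
    rw [hh.natDegree_mul hg'm] at hgd
    exact ⟨g', mem_monicsOfDegree.mpr ⟨hg'm, by omega⟩, rfl⟩

lemma monicsOfDegree_zero : monicsOfDegree F 0 = {1} := by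
  ext g
  rw [mem_monicsOfDegree, Finset.mem_singleton]
  exact ⟨fun h => h.1.natDegree_eq_zero.mp h.2, by rintro rfl; exact ⟨monic_one, natDegree_one⟩⟩

-- On monic polynomials of degree at least `deg f`, replacing the residue of `g` modulo `f` by that
-- of `g * z` is a bijection when `z` is invertible modulo `f`.
lemma sum_monicsOfDegree_eq_of_modByMonic {M : Type*} [AddCommMonoid M] {f z : F[X]} (hf : f.Monic)
    (hz : IsCoprime f z) {n : ℕ} (hn : f.natDegree ≤ n) (w : F[X] → M) :
    ∑ g ∈ monicsOfDegree F n, w (f * (g /ₘ f) + g * z %ₘ f) = ∑ g ∈ monicsOfDegree F n, w g := by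
  classical
  set T : F[X] → F[X] := fun g => f * (g /ₘ f) + g * z %ₘ f
  have hmaps : ∀ g ∈ monicsOfDegree F n, T g ∈ monicsOfDegree F n := fun g hg => by
    rw [mem_monicsOfDegree] at hg ⊢
    have hT : T g = g + (g * z %ₘ f - g %ₘ f) := by linear_combination modByMonic_add_div g f
    have hfg : f.degree ≤ g.degree := by
      rw [degree_eq_natDegree hf.ne_zero, degree_eq_natDegree hg.1.ne_zero, hg.2]
      exact_mod_cast hn
    have hlt : (g * z %ₘ f - g %ₘ f).degree < g.degree :=
      (degree_sub_le _ _).trans_lt (max_lt ((degree_modByMonic_lt _ hf).trans_le hfg)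
        ((degree_modByMonic_lt _ hf).trans_le hfg))
    rw [hT]
    exact ⟨hg.1.add_of_left hlt, by rw [natDegree_add_eq_left_of_degree_lt hlt, hg.2]⟩
  have hdiv_mod (g) : T g /ₘ f = g /ₘ f ∧ T g %ₘ f = g * z %ₘ f :=
    div_modByMonic_unique _ _ hf ⟨add_comm _ _, degree_modByMonic_lt _ hf⟩
  have hinj : Function.Injective T := fun g g' h => by
    have hdiv : g /ₘ f = g' /ₘ f := by rw [← (hdiv_mod g).1, h, (hdiv_mod g').1]
    have hmod : g * z %ₘ f = g' * z %ₘ f := by rw [← (hdiv_mod g).2, h, (hdiv_mod g').2]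
    have hdvd : f ∣ (g - g') * z := by
      rw [← modByMonic_eq_zero_iff_dvd hf, sub_mul, sub_modByMonic, hmod, sub_self]
    have hgg' := hz.dvd_of_dvd_mul_right hdvd
    rw [← modByMonic_eq_zero_iff_dvd hf, sub_modByMonic, sub_eq_zero] at hgg'
    rw [← modByMonic_add_div g f, ← modByMonic_add_div g' f, hdiv, hgg']
  have himage : (monicsOfDegree F n).image T = monicsOfDegree F n :=
    Finset.eq_of_subset_of_card_le (Finset.image_subset_iff.mpr hmaps)
      (Finset.card_image_of_injective _ hinj).ge
  conv_rhs => rw [← himage, Finset.sum_image hinj.injOn]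

end

variable [Fintype F]

section

variable (p : ℕ) [Fact p.Prime] [CharP F p]

/-- The quadratic character sum of `f` over the extension of degree `k + 1`. -/
noncomputable def extCharSum (f : F[X]) (k : ℕ) : ℤ :=
  ∑ x : FiniteField.Extension F p (k + 1), quadraticChar _ (aeval x f)

lemma abs_extCharSum_le (hF : ringChar F ≠ 2) {f : F[X]} (hm : f.Monic) (hf : f.Separable)
    (hu : ¬ IsUnit f) {i : ℕ} (hi : 2 * f.natDegree ≤ Fintype.card F ^ (i + 1)) :
    |extCharSum p f (2 * i + 1)| ≤ 4 * f.natDegree * (Fintype.card F : ℤ) ^ (i + 1) := by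
  obtain ⟨n, -, hn⟩ := FiniteField.card F p
  let E := FiniteField.Extension F p (2 * i + 1 + 1)
  have hp : p ≠ 2 := ringChar.eq F p ▸ hF
  have : CharP E p := charP_of_injective_algebraMap (algebraMap F E).injective p
  have hq : Fintype.card F ^ (i + 1) = p ^ (n * (i + 1)) := by rw [hn, pow_mul]
  have hcard : Fintype.card E = (p ^ (n * (i + 1))) ^ 2 := by
    rw [Fintype.card_eq_nat_card, FiniteField.natCard_extension, Nat.card_eq_fintype_card, ← hq]
    ring
  have huE : ¬ IsUnit (f.map (algebraMap F E)) := by rwa [isUnit_map]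
  have hstep := abs_sum_quadraticChar_le_of_card_eq_sq p (n * (i + 1)) hp
    (hf.map (f := algebraMap F E)).squarefree huE (hm.map _) hcard
    (by rwa [natDegree_map, ← hq])
  have hqZ : (Fintype.card F : ℤ) ^ (i + 1) = p ^ (n * (i + 1)) := mod_cast hq
  simpa only [extCharSum, hqZ, eval_map_algebraMap, natDegree_map] using hstep

end

variable [DecidableEq F]

/-- The coefficient of `u ^ n` in the `L`-function `∑ (f / g) u ^ deg g`, over monic `g`, of the
quadratic character attached to `f`. -/
noncomputable def lCoeff (f : F[X]) (n : ℕ) : ℤ := ∑ g ∈ monicsOfDegree F n, polyJacobiSym f g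

lemma lCoeff_zero (f : F[X]) : lCoeff f 0 = 1 := by
  simp [lCoeff, monicsOfDegree_zero, polyJacobiSym]

lemma lCoeff_one (f : F[X]) : lCoeff f 1 = ∑ x : F, quadraticChar F (f.eval x) := by
  symm
  refine Finset.sum_bij (fun c _ => X - C c) (fun c _ => ?_) (fun a _ b _ h => by simpa using h)
    (fun g hg => ?_) fun c _ => ?_
  · exact mem_monicsOfDegree.mpr ⟨monic_X_sub_C c, natDegree_X_sub_C c⟩
  · rw [mem_monicsOfDegree] at hg
    refine ⟨-g.coeff 0, Finset.mem_univ _, ?_⟩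
    conv_rhs => rw [hg.1.eq_X_add_C hg.2]
    simp
  · rw [polyJacobiSym, natDegree_X_sub_C, resultant_X_sub_C_left _ _ _ le_rfl]

-- By reciprocity the coefficient is, up to sign, the sum of `(g / f)`, and multiplying the residue
-- of `g` modulo `f` by some `z` with `(z / f) = -1` changes the sign of that sum.
lemma lCoeff_eq_zero (hF : ringChar F ≠ 2) {f : F[X]} (hm : f.Monic) (hf : Squarefree f)
    (hu : ¬ IsUnit f) {n : ℕ} (hn : f.natDegree ≤ n) : lCoeff f n = 0 := by
  obtain ⟨z, hz⟩ := exists_polyJacobiSym_eq_neg_one hF hm hf hu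
  have hcop : IsCoprime f z := by
    by_contra h
    simp [polyJacobiSym_eq_zero_of_not_isCoprime hm h] at hz
  have hflip (g : F[X]) : polyJacobiSym (f * (g /ₘ f) + g * z %ₘ f) f = -polyJacobiSym g f := by
    have hdvd : f ∣ f * (g /ₘ f) + g * z %ₘ f - g * z :=
      ⟨g /ₘ f - g * z /ₘ f, by linear_combination modByMonic_add_div (g * z) f⟩
    rw [polyJacobiSym_congr_left hm hdvd, polyJacobiSym_mul_left _ _ hm, hz, mul_neg_one]
  have hsum : ∑ g ∈ monicsOfDegree F n, polyJacobiSym g f = 0 := by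
    have := sum_monicsOfDegree_eq_of_modByMonic hm hcop hn (polyJacobiSym · f)
    simp only [hflip, Finset.sum_neg_distrib] at this
    linarith
  have hrecip : lCoeff f n = quadraticChar F ((-1) ^ (n * f.natDegree)) *
      ∑ g ∈ monicsOfDegree F n, polyJacobiSym g f := by
    rw [lCoeff, Finset.mul_sum]
    refine Finset.sum_congr rfl fun g hg => ?_
    rw [polyJacobiSym_comm, (mem_monicsOfDegree.mp hg).2]
  rw [hrecip, hsum, mul_zero]

variable (p : ℕ) [Fact p.Prime] [CharP F p]

lemma extCharSum_mul_lCoeff (hF : ringChar F ≠ 2) (f : F[X]) (k j : ℕ) :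
    extCharSum p f k * lCoeff f j = ∑ g ∈ monicsOfDegree F (k + 1 + j), polyJacobiSym f g *
      {x : FiniteField.Extension F p (k + 1) | elemCharpoly F x ∣ g}.ncard := by
  classical
  have hterm (x : FiniteField.Extension F p (k + 1)) :
      quadraticChar _ (aeval x f) * lCoeff f j =
        ∑ g ∈ monicsOfDegree F (k + 1 + j),
          if elemCharpoly F x ∣ g then polyJacobiSym f g else 0 := by
    have hx := monic_elemCharpoly (F := F) x
    have hdeg : (elemCharpoly F x).natDegree = k + 1 := by
      rw [natDegree_elemCharpoly, FiniteField.finrank_extension]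
    have hmul := sum_monicsOfDegree_mul hx j (polyJacobiSym f)
    rw [hdeg] at hmul
    rw [← Finset.sum_filter, ← hmul, lCoeff, Finset.mul_sum]
    refine Finset.sum_congr rfl fun g hg => ?_
    rw [polyJacobiSym_mul_right f hx (mem_monicsOfDegree.mp hg).1, polyJacobiSym_elemCharpoly hF]
  rw [extCharSum, Finset.sum_mul, Finset.sum_congr rfl fun x _ => hterm x, Finset.sum_comm]
  refine Finset.sum_congr rfl fun g _ => ?_
  rw [← Finset.sum_filter, Finset.sum_const, nsmul_eq_mul, mul_comm, Set.ncard_eq_toFinset_card',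
    Set.toFinset_ofPred]

-- `u L'(u) / L(u) = ∑ S_n u ^ n`, with `S_n` the character sum over the extension of degree `n`.
lemma derivative_mk_lCoeff (hF : ringChar F ≠ 2) (f : F[X]) :
    PowerSeries.derivative ℤ (.mk (lCoeff f)) = .mk (lCoeff f) * .mk (extCharSum p f) := by
  ext n
  rw [mul_comm, PowerSeries.coeff_derivative, PowerSeries.coeff_mul, PowerSeries.coeff_mk,
    Finset.Nat.sum_antidiagonal_eq_sum_range_succ_mk, lCoeff, Finset.sum_mul]
  have hterm {k : ℕ} (hk : k ∈ Finset.range (n + 1)) :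
      extCharSum p f k * lCoeff f (n - k) = ∑ g ∈ monicsOfDegree F (n + 1), polyJacobiSym f g *
        {x : FiniteField.Extension F p (k + 1) | elemCharpoly F x ∣ g}.ncard := by
    rw [extCharSum_mul_lCoeff p hF, show k + 1 + (n - k) = n + 1 by grind]
  simp only [PowerSeries.coeff_mk]
  rw [Finset.sum_congr rfl fun k hk => hterm hk, Finset.sum_comm]
  refine Finset.sum_congr rfl fun g hg => ?_
  obtain ⟨hgm, hgd⟩ := mem_monicsOfDegree.mp hg
  rw [← Finset.mul_sum, ← Nat.cast_sum, sum_ncard_elemCharpoly_dvd p hgm.ne_zero hgd.le, hgd]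
  push_cast
  rfl

end LFunction

section PowerSums

lemma sum_map_pow_mul_eval {R : Type*} [CommSemiring R] (s : Multiset R) (P : R[X]) (k : ℕ) :
    (s.map fun b => b ^ k * P.eval b).sum =
      ∑ l ∈ Finset.range (P.natDegree + 1), P.coeff l * (s.map (· ^ (k + l))).sum := by
  have heval (b : R) : b ^ k * P.eval b =
      ∑ l ∈ Finset.range (P.natDegree + 1), P.coeff l * b ^ (k + l) := by
    rw [eval_eq_sum_range, Finset.mul_sum]
    exact Finset.sum_congr rfl fun l _ => by ring
  simp only [heval, Multiset.sum_map_sum, Multiset.sum_map_mul_left]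

open Asymptotics Filter in
-- The Lagrange basis polynomial at `β` isolates the contribution of `β` to the power sums.
lemma norm_le_of_sum_pow_isBigO {𝕜 : Type*} [NormedField 𝕜] [CharZero 𝕜] {s : Multiset 𝕜} {R : ℝ}
    (hR : 0 ≤ R) (h : (fun k : ℕ => (s.map (· ^ k)).sum) =O[atTop] (R ^ ·)) {β : 𝕜} (hβ : β ∈ s) :
    ‖β‖ ≤ R := by
  classical
  by_contra! hlt
  have hβ' : β ∈ s.toFinset := Multiset.mem_toFinset.mpr hβ
  let P : 𝕜[X] := Lagrange.basis s.toFinset id β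
  have hisolate (k : ℕ) : (s.map fun b => b ^ k * P.eval b).sum = s.count β * β ^ k := by
    rw [Finset.sum_multiset_map_count, Finset.sum_eq_single_of_mem β hβ' fun γ hγ hne => ?_]
    · have : P.eval β = 1 := Lagrange.eval_basis_self Function.injective_id.injOn hβ'
      rw [this, mul_one, nsmul_eq_mul]
    · have : P.eval γ = 0 := Lagrange.eval_basis_of_ne (v := id) hne.symm hγ
      rw [this, mul_zero, smul_zero]
  have hshift (l : ℕ) : (fun k : ℕ => (s.map (· ^ (k + l))).sum) =O[atTop] (R ^ ·) := by
    refine (h.comp_tendsto (tendsto_add_atTop_nat l)).trans ?_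
    simp only [Function.comp_def, pow_add, mul_comm _ (R ^ l)]
    exact isBigO_const_mul_self _ _ _
  have hsum : (fun k => (s.count β : 𝕜) * β ^ k) =O[atTop] (R ^ ·) := by
    simp only [← hisolate, sum_map_pow_mul_eval]
    exact .fun_sum fun l _ => (hshift l).const_mul_left _
  have hcount : (s.count β : 𝕜) ≠ 0 := Nat.cast_ne_zero.mpr (Multiset.count_ne_zero.mpr hβ)
  have hpow : (fun k => ‖β‖ ^ k) =O[atTop] (R ^ ·) := by
    simpa only [norm_pow] using ((isBigO_const_mul_left_iff hcount).mp hsum).norm_left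
  refine isLittleO_irrefl (.of_forall fun k => ?_)
    (hpow.trans_isLittleO (isLittleO_pow_pow_of_lt_left hR hlt))
  exact pow_ne_zero _ (hR.trans_lt hlt).ne'

end PowerSums

section InverseRoots

lemma reverse_prod_X_sub_C {R : Type*} [CommRing R] [IsDomain R] (s : Multiset R) :
    (s.map fun a => X - C a).prod.reverse = (s.map fun a => 1 - C a * X).prod := by
  induction s using Multiset.induction_on with
  | empty => simpa using reverse_C (1 : R)
  | cons a s ih =>
    have hlinear : (X - C a).reverse = 1 - C a * X := by
      rw [sub_eq_add_neg, ← C_neg, reverse_add_C, natDegree_X, pow_one]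
      have : (X : R[X]).reverse = 1 := by rw [← one_mul X, reverse_mul_X, ← C_1, reverse_C]
      rw [this, C_neg]
      ring
    rw [Multiset.map_cons, Multiset.prod_cons, reverse_mul_of_domain, hlinear, ih,
      Multiset.map_cons, Multiset.prod_cons]

lemma reverse_reverse_of_coeff_zero_ne_zero {R : Type*} [Semiring R] {f : R[X]}
    (hf : f.coeff 0 ≠ 0) : f.reverse.reverse = f := by
  rw [reverse, reverse_natDegree, natTrailingDegree_eq_zero.mpr (.inr hf), Nat.sub_zero, reverse,
    reflect_reflect]

lemma exists_eq_prod_one_sub_C_mul_X {K : Type*} [Field K] [IsAlgClosed K] {L : K[X]}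
    (h0 : L.coeff 0 = 1) :
    ∃ s : Multiset K, s.card = L.natDegree ∧ L = (s.map fun a => 1 - C a * X).prod := by
  have hne : L.coeff 0 ≠ 0 := h0 ▸ one_ne_zero
  have htrail : L.natTrailingDegree = 0 := natTrailingDegree_eq_zero.mpr (.inr hne)
  have hm : L.reverse.Monic := by rw [Monic, reverse_leadingCoeff, trailingCoeff, htrail, h0]
  have hsplit := IsAlgClosed.splits L.reverse
  refine ⟨L.reverse.roots, ?_, ?_⟩
  · rw [← hsplit.natDegree_eq_card_roots, reverse_natDegree, htrail, Nat.sub_zero]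
  · rw [← reverse_prod_X_sub_C, ← hsplit.eq_prod_roots_of_monic hm,
      reverse_reverse_of_coeff_zero_ne_zero hne]

lemma derivative_prod_one_sub_C_mul_X {R : Type*} [CommRing R] (s : Multiset R) :
    PowerSeries.derivative R (s.map fun a => 1 - PowerSeries.C a * PowerSeries.X).prod =
      (s.map fun a => 1 - PowerSeries.C a * PowerSeries.X).prod *
        -.mk fun k => (s.map (· ^ (k + 1))).sum := by
  induction s using Multiset.induction_on with
  | empty => ext; simp
  | cons a s ih =>
    have hgeom : (1 - PowerSeries.C a * PowerSeries.X) * .mk (fun k => a ^ (k + 1)) =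
        PowerSeries.C a := by
      ext n
      cases n with
      | zero => simp [sub_mul, mul_assoc]
      | succ n =>
        simp [sub_mul, mul_assoc, PowerSeries.coeff_succ_X_mul, pow_succ']
    have hsplit : PowerSeries.mk (fun k => ((a ::ₘ s).map (· ^ (k + 1))).sum) =
        .mk (fun k => a ^ (k + 1)) + .mk fun k => (s.map (· ^ (k + 1))).sum := by
      ext n
      simp
    have hlinear : PowerSeries.derivative R (1 - PowerSeries.C a * PowerSeries.X) =
        -PowerSeries.C a := by
      rw [map_sub, Derivation.leibniz]
      simp
    rw [hsplit, Multiset.map_cons, Multiset.prod_cons, Derivation.leibniz, ih, hlinear]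
    simp only [smul_eq_mul]
    linear_combination
      (s.map fun a => 1 - PowerSeries.C a * PowerSeries.X).prod * hgeom

lemma exists_eq_neg_sum_pow_of_derivative_eq {K : Type*} [Field K] [IsAlgClosed K] {c S : ℕ → K}
    {d : ℕ} (h0 : c 0 = 1) (hd : ∀ n, d ≤ n → c n = 0)
    (h : PowerSeries.derivative K (.mk c) = .mk c * .mk S) :
    ∃ s : Multiset K, s.card < d ∧ ∀ k, S k = -(s.map (· ^ (k + 1))).sum := by
  obtain ⟨d, rfl⟩ : ∃ m, d = m + 1 := Nat.exists_eq_succ_of_ne_zero <| by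
    rintro rfl
    simp [hd 0 le_rfl] at h0
  let L : K[X] := PowerSeries.trunc (d + 1) (.mk c)
  have hcoeff (n : ℕ) : L.coeff n = c n := by
    rw [PowerSeries.coeff_trunc, PowerSeries.coeff_mk]
    grind
  have hL : (L : PowerSeries K) = .mk c := by
    ext n
    rw [coeff_coe, hcoeff, PowerSeries.coeff_mk]
  obtain ⟨s, hcard, hs⟩ := exists_eq_prod_one_sub_C_mul_X ((hcoeff 0).trans h0)
  have hprod : .mk c = (s.map fun a => 1 - PowerSeries.C a * PowerSeries.X).prod := by
    rw [← hL, hs, ← coeToPowerSeries.ringHom_apply, map_multiset_prod, Multiset.map_map]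
    simp [Function.comp_def, coeToPowerSeries.ringHom_apply]
  have hne : PowerSeries.mk c ≠ 0 := fun hc => by
    simpa [h0] using congrArg (PowerSeries.coeff 0) hc
  have hS : .mk S = -PowerSeries.mk fun k => (s.map (· ^ (k + 1))).sum := by
    refine mul_left_cancel₀ hne ?_
    rw [← h, hprod, derivative_prod_one_sub_C_mul_X]
  refine ⟨s, hcard ▸ PowerSeries.natDegree_trunc_lt _ d, fun k => ?_⟩
  simpa using congrArg (PowerSeries.coeff k) hS

end InverseRoots

section Weil

variable {F : Type*} [Field F] [Fintype F]

lemma exists_extCharSum_eq_neg_sum_pow (p : ℕ) [Fact p.Prime] [CharP F p] (hF : ringChar F ≠ 2)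
    {f : F[X]} (hm : f.Monic) (hf : Squarefree f) (hu : ¬ IsUnit f) :
    ∃ s : Multiset ℂ, s.card < f.natDegree ∧
      ∀ k, (extCharSum p f k : ℂ) = -(s.map (· ^ (k + 1))).sum := by
  classical
  refine exists_eq_neg_sum_pow_of_derivative_eq (c := fun n => (lCoeff f n : ℂ))
    (S := fun k => (extCharSum p f k : ℂ)) (by simp [lCoeff_zero])
    (fun n hn => by simp [lCoeff_eq_zero hF hm hf hu hn]) ?_
  ext n
  have hn := congrArg (PowerSeries.coeff n) (derivative_mk_lCoeff p hF f)
  simp only [PowerSeries.coeff_derivative, PowerSeries.coeff_mul, PowerSeries.coeff_mk] at hn ⊢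
  exact_mod_cast hn

open Asymptotics Filter in
-- Only even degrees are needed: they bound the power sums of the squares `a ^ 2`.
lemma norm_le_sqrt_card_of_extCharSum_eq (p : ℕ) [Fact p.Prime] [CharP F p] (hF : ringChar F ≠ 2)
    {f : F[X]} (hm : f.Monic) (hf : f.Separable) (hu : ¬ IsUnit f) {s : Multiset ℂ}
    (hs : ∀ k, (extCharSum p f k : ℂ) = -(s.map (· ^ (k + 1))).sum) {a : ℂ} (ha : a ∈ s) :
    ‖a‖ ≤ √(Fintype.card F) := by
  have hsq : ‖a ^ 2‖ ≤ (Fintype.card F : ℝ) := by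
    refine norm_le_of_sum_pow_isBigO (s := s.map (· ^ 2)) (Nat.cast_nonneg _) ?_
      (Multiset.mem_map_of_mem _ ha)
    refine .of_bound (4 * f.natDegree) ?_
    filter_upwards [eventually_ge_atTop (2 * f.natDegree + 1)] with k hk
    obtain ⟨i, rfl⟩ : ∃ i, k = i + 1 := ⟨k - 1, by omega⟩
    have hlarge : 2 * f.natDegree ≤ Fintype.card F ^ (i + 1) := by
      have := Nat.lt_pow_self (Fintype.one_lt_card (α := F)) (n := i + 1)
      omega
    have hsum : ((s.map (· ^ 2)).map (· ^ (i + 1))).sum = -(extCharSum p f (2 * i + 1) : ℂ) := by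
      rw [hs, neg_neg, Multiset.map_map]
      simp only [Function.comp_def, ← pow_mul, mul_add, mul_one, add_assoc, one_add_one_eq_two]
    rw [hsum, norm_neg, Complex.norm_intCast, norm_pow, Real.norm_natCast]
    exact_mod_cast abs_extCharSum_le p hF hm hf hu hlarge
  rw [norm_pow] at hsq
  exact Real.le_sqrt_of_sq_le hsq

theorem abs_sum_quadraticChar_le [DecidableEq F] (hF : ringChar F ≠ 2) {f : F[X]} (hm : f.Monic)
    (hf : f.Separable) (hu : ¬ IsUnit f) :
    |(∑ x, quadraticChar F (f.eval x) : ℝ)| ≤ (f.natDegree - 1) * √(Fintype.card F) := by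
  obtain ⟨p, hp⟩ := CharP.exists F
  have : Fact p.Prime := ⟨CharP.char_is_prime F p⟩
  obtain ⟨s, hcard, hs⟩ := exists_extCharSum_eq_neg_sum_pow p hF hm hf.squarefree hu
  have hext : ∑ x, quadraticChar F (f.eval x) = extCharSum p f 0 := by
    have h0 := congrArg (PowerSeries.coeff 0) (derivative_mk_lCoeff p hF f)
    rw [PowerSeries.coeff_derivative] at h0
    simpa [lCoeff_zero, lCoeff_one] using h0
  calc |(∑ x, quadraticChar F (f.eval x) : ℝ)| = ‖(extCharSum p f 0 : ℂ)‖ := by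
        rw [← hext, Complex.norm_intCast]
        push_cast
        rfl
    _ = ‖s.sum‖ := by simp [hs]
    _ ≤ (s.map (‖·‖)).sum := norm_multiset_sum_le s
    _ ≤ s.card * √(Fintype.card F) := by
        simpa using Multiset.sum_le_card_nsmul (s.map (‖·‖)) _ fun _ hx => by
          obtain ⟨a, ha, rfl⟩ := Multiset.mem_map.mp hx
          exact norm_le_sqrt_card_of_extCharSum_eq p hF hm hf hu hs ha
    _ ≤ (f.natDegree - 1) * √(Fintype.card F) := by
        gcongr
        rw [le_sub_iff_add_le]
        exact_mod_cast hcard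

end Weil

section Sieve

lemma two_nsmul_sum_finset_sum {ι M : Type*} [Fintype ι] [AddCommMonoid M] (w : ι → M) :
    2 • ∑ T : Finset ι, ∑ i ∈ T, w i = 2 ^ Fintype.card ι • ∑ i, w i := by
  classical
  have hcompl : ∑ T : Finset ι, ∑ i ∈ Tᶜ, w i = ∑ T : Finset ι, ∑ i ∈ T, w i :=
    Fintype.sum_equiv (compl_involutive.toPerm _) _ _ fun _ => rfl
  rw [two_nsmul]
  nth_rewrite 2 [← hcompl]
  rw [← Finset.sum_add_distrib]
  simp only [Finset.sum_add_sum_compl, Finset.sum_const, Finset.card_univ, Fintype.card_finset]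

variable {F : Type*} [Field F] [Fintype F] [DecidableEq F] {ι : Type*} [Fintype ι]

lemma prod_one_add_mul_quadraticChar_le {ε : ι → ℤˣ} {x : ι → F}
    (h : ¬ ∀ i, quadraticChar F (x i) = ε i) :
    ∏ i, (1 + ε i * quadraticChar F (x i)) ≤ if ∏ i, x i = 0 then 2 ^ Fintype.card ι else 0 := by
  have hfactor (i : ι) :
      0 ≤ 1 + ε i * quadraticChar F (x i) ∧ 1 + ε i * quadraticChar F (x i) ≤ 2 := by
    rcases Int.units_eq_one_or (ε i) with hε | hε <;>
      rcases quadraticChar_isQuadratic F (x i) with hχ | hχ | hχ <;> simp [hε, hχ]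
  split_ifs with h0
  · calc ∏ i, (1 + ε i * quadraticChar F (x i))
        ≤ ∏ _i : ι, 2 := Finset.prod_le_prod (fun i _ => (hfactor i).1) fun i _ => (hfactor i).2
      _ = 2 ^ Fintype.card ι := Finset.prod_const _
  · obtain ⟨i, hi⟩ := not_forall.mp h
    have hχ0 : quadraticChar F (x i) ≠ 0 :=
      mt quadraticChar_eq_zero_iff.mp (Finset.prod_ne_zero_iff.mp h0 i (Finset.mem_univ i))
    refine (Finset.prod_eq_zero (Finset.mem_univ i) ?_).le
    rcases Int.units_eq_one_or (ε i) with hε | hε <;>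
      rcases quadraticChar_isQuadratic F (x i) with hχ | hχ | hχ <;> simp_all

variable {g : ι → F[X]}

lemma sum_prod_one_add_mul_quadraticChar (ε : ι → ℤˣ) :
    ∑ a, ∏ i, (1 + ε i * quadraticChar F ((g i).eval a)) =
      ∑ T : Finset ι, (∏ i ∈ T, ε i : ℤˣ) * ∑ a, quadraticChar F ((∏ i ∈ T, g i).eval a) := by
  simp only [Finset.prod_one_add, Finset.powerset_univ, Finset.mul_sum]
  rw [Finset.sum_comm]
  simp only [Finset.prod_mul_distrib, eval_prod, map_prod, Units.coe_prod]

lemma neg_le_unit_mul_sum_quadraticChar_prod (hF : ringChar F ≠ 2) (hm : ∀ i, (g i).Monic)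
    (hu : ∀ i, ¬ IsUnit (g i)) (hsep : (∏ i, g i).Separable) (ε : ℤˣ) {T : Finset ι}
    (hT : T.Nonempty) :
    -((∑ i ∈ T, ((g i).natDegree : ℝ) - 1) * √(Fintype.card F)) ≤
      (ε * ∑ a, quadraticChar F ((∏ i ∈ T, g i).eval a) : ℤ) := by
  obtain ⟨j, hj⟩ := hT
  have hweil := abs_sum_quadraticChar_le hF (monic_prod_of_monic T g fun i _ => hm i)
    (hsep.of_dvd (Finset.prod_dvd_prod_of_subset _ _ _ (Finset.subset_univ T)))
    fun h => hu j (isUnit_of_dvd_unit (Finset.dvd_prod_of_mem g hj) h)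
  rw [natDegree_prod_of_monic _ _ fun i _ => hm i, Nat.cast_sum] at hweil
  refine neg_le.mpr (le_trans ?_ hweil)
  push_cast
  rcases Int.units_eq_one_or ε with rfl | rfl
  · simpa using neg_le_abs _
  · simpa using le_abs_self _

lemma le_sum_prod_one_add_mul_quadraticChar (hF : ringChar F ≠ 2) (hm : ∀ i, (g i).Monic)
    (hu : ∀ i, ¬ IsUnit (g i)) (hsep : (∏ i, g i).Separable) (ε : ι → ℤˣ) :
    Fintype.card F - (2 ^ Fintype.card ι * ((∑ i, (g i).natDegree : ℝ) / 2 - 1) + 1) *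
        √(Fintype.card F) ≤
      (∑ a, ∏ i, (1 + ε i * quadraticChar F ((g i).eval a)) : ℤ) := by
  classical
  set r := √(Fintype.card F)
  let d (T : Finset ι) : ℝ := ∑ i ∈ T, ((g i).natDegree : ℝ)
  have hdeg : ∑ T, d T = 2 ^ Fintype.card ι * (∑ i, (g i).natDegree : ℝ) / 2 := by
    have := two_nsmul_sum_finset_sum fun i => ((g i).natDegree : ℝ)
    simp only [nsmul_eq_mul] at this
    push_cast at this
    linarith
  have hterm (T : Finset ι) : (if T = ∅ then (Fintype.card F - r : ℝ) else 0) - (d T - 1) * r ≤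
      ((∏ i ∈ T, ε i : ℤˣ) * ∑ a, quadraticChar F ((∏ i ∈ T, g i).eval a) : ℤ) := by
    rcases T.eq_empty_or_nonempty with rfl | hT
    · simp [d]
    · rw [if_neg hT.ne_empty, zero_sub]
      exact neg_le_unit_mul_sum_quadraticChar_prod hF hm hu hsep _ hT
  calc _ = ∑ T, ((if T = ∅ then (Fintype.card F - r : ℝ) else 0) - (d T - 1) * r) := by
        rw [Finset.sum_sub_distrib, ← Finset.sum_mul, Finset.sum_sub_distrib, hdeg]
        simp only [Finset.sum_ite_eq', Finset.mem_univ, if_true, Finset.sum_const,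
          Finset.card_univ, Fintype.card_finset, nsmul_eq_mul]
        push_cast
        ring
    _ ≤ _ := by
        rw [sum_prod_one_add_mul_quadraticChar, Int.cast_sum]
        exact Finset.sum_le_sum fun T _ => hterm T

theorem exists_forall_quadraticChar_eval_eq (hF : ringChar F ≠ 2) (hm : ∀ i, (g i).Monic)
    (hu : ∀ i, ¬ IsUnit (g i)) (hsep : (∏ i, g i).Separable) (ε : ι → ℤˣ)
    (hq : (2 ^ Fintype.card ι * ((∑ i, (g i).natDegree : ℝ) / 2 - 1) + 1) * √(Fintype.card F) +
      2 ^ Fintype.card ι * (∑ i, (g i).natDegree : ℝ) < Fintype.card F) :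
    ∃ a, ∀ i, quadraticChar F ((g i).eval a) = ε i := by
  by_contra! hnone
  have hlower := le_sum_prod_one_add_mul_quadraticChar hF hm hu hsep ε
  have hzeros := card_eval_eq_zero_le (monic_prod_of_monic .univ g fun i _ => hm i).ne_zero
  rw [natDegree_prod_of_monic _ _ fun i _ => hm i] at hzeros
  have hupper : ∑ a, ∏ i, (1 + ε i * quadraticChar F ((g i).eval a)) ≤
      2 ^ Fintype.card ι * ∑ i, ((g i).natDegree : ℤ) := calc
    _ ≤ ∑ a, if (∏ i, g i).eval a = 0 then 2 ^ Fintype.card ι else 0 :=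
        Finset.sum_le_sum fun a _ => by
          rw [eval_prod]
          exact prod_one_add_mul_quadraticChar_le (not_forall.mpr (hnone a))
    _ = 2 ^ Fintype.card ι * (Finset.card {a | (∏ i, g i).eval a = 0} : ℤ) := by
        rw [← Finset.sum_filter, Finset.sum_const, nsmul_eq_mul, mul_comm]
    _ ≤ _ := by
        gcongr
        exact_mod_cast hzeros
  have hupper' := (Int.cast_le (R := ℝ)).mpr hupper
  push_cast at hlower hupper'
  linarith

end Sieve

section SignConditions

/-- The eight polynomials whose values at `a` have prescribed quadratic character. -/
noncomputable def signPoly (R : Type*) [CommRing R] : Fin 8 → R[X] :=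
  ![X, X + 1, X - 1, X ^ 2 + 1, X ^ 3 + X ^ 2 - 1, X ^ 2 - X + 1, X ^ 2 + X + 1, X ^ 2 + X - 1]

/-- The quadratic characters prescribed for the values of `signPoly`. -/
def prescribedSign : Fin 8 → ℤˣ := ![1, 1, 1, 1, 1, -1, -1, -1]

lemma monic_signPoly (R : Type*) [CommRing R] (i : Fin 8) : (signPoly R i).Monic := by
  nontriviality R
  fin_cases i <;> dsimp [signPoly] <;> monicity!

lemma natDegree_signPoly (R : Type*) [CommRing R] [Nontrivial R] (i : Fin 8) :
    (signPoly R i).natDegree = ![1, 1, 1, 2, 3, 2, 2, 2] i := by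
  fin_cases i <;> dsimp [signPoly] <;> compute_degree!

lemma eval_signPoly {R : Type*} [CommRing R] (a : R) (i : Fin 8) :
    (signPoly R i).eval a = ![a, a + 1, a - 1, a ^ 2 + 1, a ^ 3 + a ^ 2 - 1, a ^ 2 - a + 1,
      a ^ 2 + a + 1, a ^ 2 + a - 1] i := by
  fin_cases i <;> simp [signPoly]

lemma prod_signPoly (R : Type*) [CommRing R] :
    ∏ i, signPoly R i = X ^ 14 + 2 * X ^ 13 + X ^ 12 - X ^ 10 - X ^ 9 - 2 * X ^ 8 - X ^ 7 - X ^ 6 +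
      X ^ 4 + X ^ 3 + X ^ 2 - X := by
  simp only [signPoly, Fin.prod_univ_eight, Fin.isValue, Matrix.cons_val]
  ring

lemma derivative_prod_signPoly (R : Type*) [CommRing R] :
    derivative (∏ i, signPoly R i) = 14 * X ^ 13 + 26 * X ^ 12 + 12 * X ^ 11 - 10 * X ^ 9 -
      9 * X ^ 8 - 16 * X ^ 7 - 7 * X ^ 6 - 6 * X ^ 5 + 4 * X ^ 3 + 3 * X ^ 2 + 2 * X - 1 := by
  rw [prod_signPoly]
  simp only [derivative_add, derivative_sub, derivative_mul, derivative_X_pow, derivative_X,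
    derivative_ofNat, Nat.cast_ofNat, map_ofNat]
  ring

lemma separable_of_mul_add_mul_derivative_eq_C {K : Type*} [Field K] {f u v : K[X]} {c : K}
    (hc : c ≠ 0) (h : u * f + v * derivative f = C c) : f.Separable := by
  refine ⟨C c⁻¹ * u, C c⁻¹ * v, ?_⟩
  rw [mul_assoc, mul_assoc, ← mul_add, h, ← C_mul, inv_mul_cancel₀ hc, C_1]

-- The constant is `2 ^ 3 * 3 * 5 ^ 2 * 7 ^ 2 * 23`, whence the excluded characteristics; the
-- Bézout coefficients come from the extended Euclidean algorithm over `ℚ`.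
lemma separable_prod_signPoly {K : Type*} [Field K] (h : (676200 : K) ≠ 0) :
    (∏ i, signPoly K i).Separable := by
  refine separable_of_mul_add_mul_derivative_eq_C h
    (u := -39029172 * X ^ 12 - 91740686 * X ^ 11 - 82163306 * X ^ 10 - 49336738 * X ^ 9 -
      5600474 * X ^ 8 + 16017600 * X ^ 7 + 50517855 * X ^ 6 + 45081808 * X ^ 5 +
      43418662 * X ^ 4 + 26041414 * X ^ 3 + 6339911 * X ^ 2 - 1911776 * X - 5210928)
    (v := 2787798 * X ^ 13 + 6951163 * X ^ 12 + 6463574 * X ^ 11 + 3852654 * X ^ 10 -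
      174702 * X ^ 9 - 2381254 * X ^ 8 - 6650351 * X ^ 7 - 6230688 * X ^ 6 - 6471624 * X ^ 5 -
      3848629 * X ^ 4 + 186777 * X ^ 3 + 2389304 * X ^ 2 + 3858528 * X - 676200) ?_
  rw [derivative_prod_signPoly, prod_signPoly, map_ofNat]
  ring

lemma dvd_676200_iff {p : ℕ} (hp : p.Prime) :
    p ∣ 676200 ↔ p = 2 ∨ p = 3 ∨ p = 5 ∨ p = 7 ∨ p = 23 := by
  have hdvd_pow {r n : ℕ} (hr : r.Prime) (hn : n ≠ 0) : p ∣ r ^ n ↔ p = r := by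
    rw [hp.prime.dvd_pow_iff_dvd hn, Nat.prime_dvd_prime_iff_eq hp hr]
  rw [show 676200 = 2 ^ 3 * 3 ^ 1 * 5 ^ 2 * 7 ^ 2 * 23 ^ 1 by norm_num]
  iterate 4 rw [hp.dvd_mul]
  iterate 5 rw [hdvd_pow (by norm_num) (by norm_num)]
  simp only [or_assoc]

variable {F : Type*} [Field F] [Fintype F]

lemma isSquare_and_ne_zero_of_quadraticChar_eq_one [DecidableEq F] {x : F}
    (hx : quadraticChar F x = 1) : IsSquare x ∧ x ≠ 0 := by
  have h0 : x ≠ 0 := by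
    rintro rfl
    simp at hx
  exact ⟨(quadraticChar_one_iff_isSquare h0).mp hx, h0⟩

lemma exists_quadraticChar_eval_signPoly_eq [DecidableEq F] (hF : ringChar F ≠ 2)
    (h : (676200 : F) ≠ 0) (hq : 2400000 < Fintype.card F) :
    ∃ a, ∀ i, quadraticChar F ((signPoly F i).eval a) = prescribedSign i := by
  have hdeg_ne (i : Fin 8) : (signPoly F i).natDegree ≠ 0 := by
    rw [natDegree_signPoly]
    decide +revert
  have hdeg_sum : ∑ i, (signPoly F i).natDegree = 14 := by
    simp only [natDegree_signPoly]
    rfl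
  refine exists_forall_quadraticChar_eval_eq hF (monic_signPoly F)
    (fun i hi => hdeg_ne i (natDegree_eq_zero_of_isUnit hi))
    (separable_prod_signPoly h) prescribedSign ?_
  have hr : 1549 ≤ √(Fintype.card F) := Real.le_sqrt_of_sq_le <| by
    have : (2400000 : ℝ) < Fintype.card F := mod_cast hq
    linarith
  have hr2 := Real.sq_sqrt (Nat.cast_nonneg (α := ℝ) (Fintype.card F))
  rw [← Nat.cast_sum, hdeg_sum, Fintype.card_fin]
  push_cast
  nlinarith

end SignConditions
end WeilBound

open WeilBound in
theorem exists_good_a_q3mod4_general (F : Type*) [Field F] [Fintype F] (p : ℕ) [CharP F p]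
    (hp2 : p ≠ 2) (hp3 : p ≠ 3) (hp5 : p ≠ 5) (hp7 : p ≠ 7) (hp23 : p ≠ 23)
    (hbig : 2400000 < Fintype.card F) :
    ∃ a : F, a ≠ -1 ∧ a ≠ 0 ∧ a ≠ 1 ∧
      IsSquare a ∧ IsSquare (a + 1) ∧ IsSquare (a - 1) ∧
      IsSquare (a ^ 2 + 1) ∧ IsSquare (a ^ 3 + a ^ 2 - 1) ∧
      ¬ IsSquare (a ^ 2 - a + 1) ∧ ¬ IsSquare (a ^ 2 + a + 1) ∧
      ¬ IsSquare (a ^ 2 + a - 1) := by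
  classical
  have hF : ringChar F ≠ 2 := ringChar.eq F p ▸ hp2
  have hdisc : (676200 : F) ≠ 0 := by
    have hp : p.Prime := CharP.char_is_prime F p
    exact_mod_cast mt (CharP.cast_eq_zero_iff F p 676200).mp (by simp [dvd_676200_iff hp, *])
  obtain ⟨a, ha⟩ := exists_quadraticChar_eval_signPoly_eq hF hdisc hbig
  simp only [eval_signPoly] at ha
  have hsquare (i : Fin 8) (hi : prescribedSign i = 1) :=
    isSquare_and_ne_zero_of_quadraticChar_eq_one ((ha i).trans (by rw [hi]; rfl))
  have hnonsquare (i : Fin 8) (hi : prescribedSign i = -1) :=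
    quadraticChar_neg_one_iff_not_isSquare.mp ((ha i).trans (by rw [hi]; rfl))
  obtain ⟨ha0, hne0⟩ := hsquare 0 rfl
  obtain ⟨ha1, hne1⟩ := hsquare 1 rfl
  obtain ⟨ha2, hne2⟩ := hsquare 2 rfl
  exact ⟨a, mt eq_neg_iff_add_eq_zero.mp hne1, hne0, sub_ne_zero.mp hne2, ha0, ha1, ha2,
    (hsquare 3 rfl).1, (hsquare 4 rfl).1, hnonsquare 5 rfl,
    hnonsquare 6 rfl, hnonsquare 7 rfl⟩

/-- For `q ≡ 3 (mod 4)` large, in characteristic `p ∉ {2,3,5,7,23}`, there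
exists `a ∈ F_q` satisfying the square/non-square conditions of Theorem 2.5. -/
theorem exists_good_a_q3mod4 (F : Type*) [Field F] [Fintype F]
    (p q : ℕ) (hp : p.Prime) (hchar : CharP F p)
    (hp2 : p ≠ 2) (hp3 : p ≠ 3) (hp5 : p ≠ 5) (hp7 : p ≠ 7) (hp23 : p ≠ 23)
    (hq : Fintype.card F = q) (h4 : q % 4 = 3) (hbig : 2400000 < q) :
    ∃ a : F, a ≠ -1 ∧ a ≠ 0 ∧ a ≠ 1 ∧
      IsSquare a ∧ IsSquare (a + 1) ∧ IsSquare (a - 1) ∧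
      IsSquare (a ^ 2 + 1) ∧ IsSquare (a ^ 3 + a ^ 2 - 1) ∧
      ¬ IsSquare (a ^ 2 - a + 1) ∧ ¬ IsSquare (a ^ 2 + a + 1) ∧
      ¬ IsSquare (a ^ 2 + a - 1) :=
  exists_good_a_q3mod4_general F p hp2 hp3 hp5 hp7 hp23 (hq ▸ hbig)
end
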